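/- There exist constants Θ > 0 and Ψ > 0 such that for every n ∈ ℤ³ with n ≠ 0 and every ζ ∈ Ω_n, the map g ↦ g − K_{ζ,n} g from L¹(ℝ³;ℂ) to L¹(ℝ³;ℂ) is surjective. -/

import Mathlib

/-!
The equation `g - K g = f` in `L¹` is solved by passing to an `L²` space in which the collision part
of the operator is self-adjoint.

Let `μ = ν₀(v) e^{-|v|²} dv`. By detailed balance `P F(v) = ν₀(v)⁻¹ ∫ r₀(u,v) F(u) du` is the
transition operator of a Markov chain reversible with respect to the finite measure `μ`, with
symmetric pair measure `r₀(u,v) e^{-|v|²} dv du`. Write `d(v) = ν₀(v) + i n·v - ζ` for the symbol.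
Substituting `w = d e^{-|v|²} F` turns `w - K w` into `e^{-|v|²} ν₀ B F`, where
`B F = (d/ν₀) F - P F`. A single iteration `g = f + w` leads to `w - K w = K f`, and `K f` is
`e^{-|v|²} ν₀` times a bounded function; so it suffices that `B` is onto `L²(μ)` and that `|d|` is
bounded below by a multiple of `ν₀` (`Good.solve_L1`).

The adjoint of `B` is the operator of the same type for `(-n, conj ζ)`, and `conj ζ` lies in the
region attached to `-n`. Hence surjectivity follows from coercivity `‖F‖ ≤ L ‖B F‖` for every `n ≠ 0`
and `ζ` in the region (`Good.solve_L2`). Coercivity is proved in two regimes.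

* `Re ζ` small (`Good.coercive_left`). The real part of `⟪F, B F⟫` is the Dirichlet form of `1 - P`
  minus a small multiple of `‖F‖²`. The Dirichlet form controls the distance of `F` to a constant `a`,
  because the pair density dominates a product density (`Good.gap`). The transport term controls
  `a`, because for `n ≠ 0` the function `n·v - Im ζ` cannot be small compared with `ν₀` on most of
  the unit ball and of its translate by `n/|n|²` (`Good.spread`, `Good.transport_control`). All
  constants are uniform in `n` and `ζ`, which fixes the threshold for `Re ζ`.
* `|Im ζ| ≥ Ψ (1+|n|)(1 + Re ζ - Θ)` (`Good.coercive_right`). If `n·v` is far from `Im ζ` then `|d|`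
  is at least of order `Ψ`; otherwise `|v|` is so large that `ν₀(v)` exceeds `2 Re ζ`, and `|d|` is
  again at least of order `Ψ`. As `P` maps `L¹(μ)` to bounded functions, `‖P F‖` is then at most
  half of `‖(d/ν₀) F‖` once `Ψ` is large.
-/

open MeasureTheory Real Filter
open scoped InnerProductSpace
noncomputable section

/-- `ℝ³` as a Euclidean space. -/
abbrev V : Type := EuclideanSpace ℝ (Fin 3)

/-- The unit sphere `S² ⊂ ℝ³`. -/
abbrev S2 : Type := Metric.sphere (0 : V) 1

/-- The surface measure on `S²`. -/
noncomputable def σS : Measure S2 := (volume : Measure V).toSphere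

/-- The Japanese bracket `⟨v⟩ = (1+|v|²)^{1/2}`. -/
noncomputable def jap (v : V) : ℝ := Real.sqrt (1 + ‖v‖ ^ 2)

/-- A fundamental domain for the torus `𝕋³ = ℝ³/(2πℤ)³`. -/
def box : Set V := {x | ∀ i : Fin 3, x i ∈ Set.Ico (0 : ℝ) (2 * π)}

/-- The standard basis vectors of `ℝ³`. -/
noncomputable def eV (i : Fin 3) : V := EuclideanSpace.single i (1 : ℝ)

/-- The `i`-th partial derivative in the `x` variable. -/
noncomputable def pdX (i : Fin 3) (f : V → V → ℝ) : V → V → ℝ :=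
  fun v x => fderiv ℝ (f v) x (eV i)

/-- The iterated `x`-derivative `∂ₓ^α`. -/
noncomputable def pdA (α : Fin 3 → ℕ) (f : V → V → ℝ) : V → V → ℝ :=
  (pdX 0)^[α 0] ((pdX 1)^[α 1] ((pdX 2)^[α 2] f))

/-- `2π`-periodicity in the `x` variable (i.e. being a function on `ℝ³ × 𝕋³`). -/
def PeriodicX (f : V → V → ℝ) : Prop :=
  ∀ v x (i : Fin 3), f v (x + (2 * π) • eV i) = f v x

/-- Sum of `F α` over all multi-indices `α` with `|α| ≤ N`. -/
noncomputable def msum (N : ℕ) (F : (Fin 3 → ℕ) → ℝ) : ℝ :=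
  ∑ α : Fin 3 → Fin (N + 1),
    if (α 0 : ℕ) + (α 1 : ℕ) + (α 2 : ℕ) ≤ N then F (fun i => (α i : ℕ)) else 0

/-- The hard-sphere collision operator `Q(f,g)`. -/
noncomputable def Qop (f g : V → ℝ) (v : V) : ℝ :=
  ∫ u : V, ∫ ω : S2, |⟪u - v, (ω : V)⟫_ℝ| *
    (f (u - ⟪u - v, (ω : V)⟫_ℝ • (ω : V)) * g (v + ⟪u - v, (ω : V)⟫_ℝ • (ω : V))
      - f u * g v) ∂σS

/-- `Q` acting in the `v` variable for each fixed `x`. -/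
noncomputable def QopX (f g : V → V → ℝ) (v x : V) : ℝ :=
  Qop (fun u => f u x) (fun u => g u x) v

/-- `ν₀(v) = ∫ r₀(u,v) du`. -/
noncomputable def nu0 (r₀ : V → V → ℝ) (v : V) : ℝ := ∫ u : V, r₀ u v

/-- `(K₀ f)(v) = ∫ r₀(v,u) f(u) du`. -/
noncomputable def K0 (r₀ : V → V → ℝ) (f : V → ℝ) (v : V) : ℝ := ∫ u : V, r₀ v u * f u

/-- `K₀` acting in the `v` variable for each fixed `x`. -/
noncomputable def K0X (r₀ : V → V → ℝ) (f : V → V → ℝ) (v x : V) : ℝ :=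
  K0 r₀ (fun u => f u x) v

/-- `ν₁(v) = ∫∫ |(u−v)·ω| e^{−|u|²} du dω`. -/
noncomputable def nu1 (v : V) : ℝ :=
  ∫ u : V, ∫ ω : S2, |⟪u - v, (ω : V)⟫_ℝ| * Real.exp (-‖u‖ ^ 2) ∂σS

/-- Glassey's explicit form of `K₁`. -/
noncomputable def K1 (f : V → ℝ) (v : V) : ℝ :=
  2 * π * ∫ u : V, ‖u - v‖⁻¹ * Real.exp (-(⟪u - v, v⟫_ℝ ^ 2 / ‖u - v‖ ^ 2)) * f u
    - π * ∫ u : V, ‖u - v‖ * Real.exp (-‖v‖ ^ 2) * f u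

/-- `K₁` acting in the `v` variable for each fixed `x`. -/
noncomputable def K1X (f : V → V → ℝ) (v x : V) : ℝ := K1 (fun u => f u x) v

/-- Pointwise two-sided bound `C⁻¹ e^{−|u|²}⟨u−v⟩ ≤ r₀(u,v) ≤ C e^{−|u|²}⟨u−v⟩`. -/
def R0Bounds (r₀ : V → V → ℝ) (C : ℝ) : Prop :=
  ∀ u v : V, C⁻¹ * (Real.exp (-‖u‖ ^ 2) * jap (u - v)) ≤ r₀ u v ∧
    r₀ u v ≤ C * (Real.exp (-‖u‖ ^ 2) * jap (u - v))

/-- Detailed balance: `r₀(u,v) = r₀(v,u) e^{|v|²−|u|²}`. -/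
def R0DetailedBalance (r₀ : V → V → ℝ) : Prop :=
  ∀ u v : V, r₀ u v = r₀ v u * Real.exp (‖v‖ ^ 2 - ‖u‖ ^ 2)

/-- The bounds `|∂ᵤᵏ∂ᵥˡ r₀(u,v)| ≤ C₂ e^{−|u|²/2} ⟨u−v⟩^{1−l}` for `k+l ≤ 1`. -/
def R0DerivBounds (r₀ : V → V → ℝ) (C₂ : ℝ) : Prop :=
  ∀ u v : V,
    |r₀ u v| ≤ C₂ * (Real.exp (-‖u‖ ^ 2 / 2) * jap (u - v)) ∧
    ‖fderiv ℝ (fun u' => r₀ u' v) u‖ ≤ C₂ * (Real.exp (-‖u‖ ^ 2 / 2) * jap (u - v)) ∧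
    ‖fderiv ℝ (fun v' => r₀ u v') v‖ ≤ C₂ * Real.exp (-‖u‖ ^ 2 / 2)

/-- `n ∈ ℤ³` as a vector in `ℝ³`. -/
noncomputable def nV (n : Fin 3 → ℤ) : V :=
  (WithLp.equiv 2 (Fin 3 → ℝ)).symm (fun i => (n i : ℝ))

/-- The region `Ω_n = ℂ \ {ζ : Re ζ > Θ, |Im ζ| < Ψ(1+|n|)(1+Re ζ−Θ)}`. -/
def Om (Θ Ψ : ℝ) (n : Fin 3 → ℤ) : Set ℂ :=
  {ζ : ℂ | ¬ (Θ < ζ.re ∧ |ζ.im| < Ψ * (1 + ‖nV n‖) * (1 + ζ.re - Θ))}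

/-- The operator `K_{ζ,n} g (v) = ∫ r₀(v,u) (ν₀(u) + i n·u − ζ)⁻¹ g(u) du`. -/
noncomputable def Kzn (r₀ : V → V → ℝ) (n : Fin 3 → ℤ) (ζ : ℂ) (g : V → ℂ) (v : V) : ℂ :=
  ∫ u : V, (r₀ v u : ℂ) *
    ((nu0 r₀ u : ℝ) + Complex.I * ((∑ i : Fin 3, (n i : ℝ) * u i : ℝ) : ℂ) - ζ)⁻¹ * g u

/-! ### The Japanese bracket and bounds on the collision kernel -/

lemma one_le_jap (v : V) : 1 ≤ jap v := by
  unfold jap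
  exact Real.one_le_sqrt.mpr (by nlinarith [sq_nonneg ‖v‖])

lemma jap_pos (v : V) : 0 < jap v := lt_of_lt_of_le one_pos (one_le_jap v)

lemma jap_sq (v : V) : jap v ^ 2 = 1 + ‖v‖ ^ 2 := by
  unfold jap
  exact Real.sq_sqrt (by positivity)

lemma norm_le_jap (v : V) : ‖v‖ ≤ jap v := by
  refine abs_le_of_sq_le_sq' ?_ (jap_pos v).le |>.2
  rw [jap_sq]; linarith

lemma jap_le (v : V) : jap v ≤ 1 + ‖v‖ := by
  refine abs_le_of_sq_le_sq' ?_ (by positivity) |>.2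
  rw [jap_sq]; nlinarith [norm_nonneg v]

lemma jap_neg (v : V) : jap (-v) = jap v := by simp [jap]

/-- Peetre's inequality for the Japanese bracket. -/
lemma jap_sub_le (u v : V) : jap (u - v) ≤ 2 * jap u * jap v := by
  have h1 := one_le_jap u
  have h2 := one_le_jap v
  refine abs_le_of_sq_le_sq' ?_ (by positivity) |>.2
  have h3 : ‖u - v‖ ≤ ‖u‖ + ‖v‖ := norm_sub_le u v
  have h4 : ‖u - v‖ ^ 2 ≤ (‖u‖ + ‖v‖) ^ 2 := by gcongr
  rw [mul_pow, mul_pow, jap_sq, jap_sq, jap_sq]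
  nlinarith [sq_nonneg (‖u‖ - ‖v‖), mul_nonneg (sq_nonneg ‖u‖) (sq_nonneg ‖v‖),
    sq_nonneg ‖u‖, sq_nonneg ‖v‖]

lemma jap_le_jap_sub (u v : V) : jap v ≤ 2 * jap u * jap (u - v) := by
  simpa using jap_sub_le u (u - v)

lemma continuous_jap : Continuous jap := by
  unfold jap; fun_prop

lemma integrable_gauss {b : ℝ} (hb : 0 < b) : Integrable (fun v : V => Real.exp (-(b * ‖v‖ ^ 2))) := by
  have := (GaussianFourier.integrable_cexp_neg_mul_sq_norm_add (V := V) (b := (b : ℂ))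
    (by simpa) 0 0).norm
  refine this.congr (Eventually.of_forall fun v => ?_)
  simp only [Complex.norm_exp]
  norm_cast
  simp

lemma integrable_jap_pow {k : ℕ} (hk : k ≤ 4) :
    Integrable (fun v : V => jap v ^ k * Real.exp (-‖v‖ ^ 2)) := by
  refine ((integrable_gauss (b := 1 / 2) (by norm_num)).const_mul 16).mono' ?_ ?_
  · exact ((continuous_jap.pow k).mul (by fun_prop)).aestronglyMeasurable
  · refine Eventually.of_forall fun v => ?_
    have h1 := one_le_jap v
    rw [Real.norm_of_nonneg (by positivity)]
    have h2 : jap v ^ k ≤ 16 * Real.exp (1 / 2 * ‖v‖ ^ 2) := by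
      calc jap v ^ k ≤ jap v ^ 4 := pow_le_pow_right₀ h1 hk
        _ = (1 + ‖v‖ ^ 2) ^ 2 := by rw [← jap_sq]; ring
        _ ≤ (4 * Real.exp (1 / 4 * ‖v‖ ^ 2)) ^ 2 := by
            gcongr
            nlinarith [Real.add_one_le_exp (1 / 4 * ‖v‖ ^ 2), sq_nonneg ‖v‖]
        _ = 16 * Real.exp (1 / 2 * ‖v‖ ^ 2) := by
            rw [mul_pow, ← Real.exp_nat_mul]; norm_num; ring_nf
    calc jap v ^ k * Real.exp (-‖v‖ ^ 2)
        ≤ (16 * Real.exp (1 / 2 * ‖v‖ ^ 2)) * Real.exp (-‖v‖ ^ 2) := by gcongr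
      _ = 16 * Real.exp (-(1 / 2 * ‖v‖ ^ 2)) := by
          rw [mul_assoc, ← Real.exp_add]; ring_nf

/-- The hypotheses on the collision kernel that the argument uses. -/
structure Good (r₀ : V → V → ℝ) (C : ℝ) : Prop where
  nonneg : ∀ u v, 0 ≤ r₀ u v
  cont : Continuous (Function.uncurry r₀)
  db : R0DetailedBalance r₀
  pos : 0 < C
  bd : R0Bounds r₀ C

namespace Good

variable {r₀ : V → V → ℝ} {C : ℝ}

lemma le (h : Good r₀ C) (u v : V) :
    r₀ u v ≤ 2 * C * (jap u * Real.exp (-‖u‖ ^ 2)) * jap v := by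
  have hC := h.pos
  calc r₀ u v ≤ C * (Real.exp (-‖u‖ ^ 2) * jap (u - v)) := (h.bd u v).2
    _ ≤ C * (Real.exp (-‖u‖ ^ 2) * (2 * jap u * jap v)) := by
        gcongr; exact jap_sub_le u v
    _ = _ := by ring

lemma ge (h : Good r₀ C) (u v : V) :
    (2 * C)⁻¹ * ((jap u)⁻¹ * Real.exp (-‖u‖ ^ 2)) * jap v ≤ r₀ u v := by
  have hC := h.pos
  have hu := jap_pos u
  refine le_trans ?_ (h.bd u v).1
  have := jap_le_jap_sub u v
  calc (2 * C)⁻¹ * ((jap u)⁻¹ * Real.exp (-‖u‖ ^ 2)) * jap v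
      ≤ (2 * C)⁻¹ * ((jap u)⁻¹ * Real.exp (-‖u‖ ^ 2)) * (2 * jap u * jap (u - v)) := by gcongr
    _ = _ := by field_simp

lemma cont_left (h : Good r₀ C) (v : V) : Continuous fun u => r₀ u v :=
  h.cont.comp (by fun_prop : Continuous fun u : V => (u, v))

lemma cont_right (h : Good r₀ C) (u : V) : Continuous fun v => r₀ u v :=
  h.cont.comp (by fun_prop : Continuous fun v : V => (u, v))

lemma integrable (h : Good r₀ C) (v : V) : Integrable fun u => r₀ u v := by
  refine (((integrable_jap_pow (k := 1) (by norm_num)).const_mul (2 * C)).mul_const (jap v)).mono'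
    (h.cont_left v).aestronglyMeasurable (Eventually.of_forall fun u => ?_)
  rw [Real.norm_of_nonneg (h.nonneg u v)]
  simpa using h.le u v

lemma nu0_le (h : Good r₀ C) : ∃ C₁ > 0, ∀ v, nu0 r₀ v ≤ C₁ * jap v := by
  have hC := h.pos
  refine ⟨2 * C * (∫ u : V, jap u ^ 1 * Real.exp (-‖u‖ ^ 2)) + 1, ?_, fun v => ?_⟩
  · have : 0 ≤ ∫ u : V, jap u ^ 1 * Real.exp (-‖u‖ ^ 2) :=
      integral_nonneg fun u => mul_nonneg (pow_nonneg (jap_pos u).le _) (Real.exp_pos _).le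
    positivity
  · have h1 : nu0 r₀ v ≤ 2 * C * (∫ u : V, jap u ^ 1 * Real.exp (-‖u‖ ^ 2)) * jap v := by
      rw [← integral_const_mul, ← integral_mul_const]
      refine integral_mono (h.integrable v)
        (((integrable_jap_pow (k := 1) (by norm_num)).const_mul _).mul_const _) fun u => ?_
      simpa using h.le u v
    have := jap_pos v
    linarith

/-- The weight `⟨u⟩⁻¹ e^{-|u|²}` is integrable with positive integral. -/
lemma _root_.integrable_rho : Integrable fun u : V => (jap u)⁻¹ * Real.exp (-‖u‖ ^ 2) := by
  refine (integrable_jap_pow (k := 0) (by norm_num)).mono' ?_ (Eventually.of_forall fun u => ?_)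
  · exact ((continuous_jap.inv₀ fun u => (jap_pos u).ne').mul
      (by fun_prop)).aestronglyMeasurable
  · have := jap_pos u
    rw [Real.norm_of_nonneg (by positivity), pow_zero]
    gcongr
    exact inv_le_one_of_one_le₀ (one_le_jap u)

lemma _root_.integral_rho_pos : 0 < ∫ u : V, (jap u)⁻¹ * Real.exp (-‖u‖ ^ 2) := by
  have hp : ∀ u : V, 0 < (jap u)⁻¹ * Real.exp (-‖u‖ ^ 2) := fun u => by
    have := jap_pos u
    positivity
  rw [integral_pos_iff_support_of_nonneg (fun u => (hp u).le) integrable_rho]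
  have : (Function.support fun u : V => (jap u)⁻¹ * Real.exp (-‖u‖ ^ 2)) = Set.univ :=
    Set.eq_univ_of_forall fun u => (hp u).ne'
  rw [this]
  simp

lemma le_nu0 (h : Good r₀ C) : ∃ c₁ > 0, ∀ v, c₁ * jap v ≤ nu0 r₀ v := by
  have hC := h.pos
  have hp := integral_rho_pos
  refine ⟨(2 * C)⁻¹ * ∫ u : V, (jap u)⁻¹ * Real.exp (-‖u‖ ^ 2), by positivity, fun v => ?_⟩
  rw [← integral_const_mul, ← integral_mul_const]
  exact integral_mono ((integrable_rho.const_mul _).mul_const _) (h.integrable v)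
    fun u => h.ge u v

lemma nu0_pos (h : Good r₀ C) (v : V) : 0 < nu0 r₀ v := by
  obtain ⟨c, hc, H⟩ := h.le_nu0
  exact lt_of_lt_of_le (mul_pos hc (jap_pos v)) (H v)

lemma measurable_nu0 (h : Good r₀ C) : Measurable (nu0 r₀) := by
  have : StronglyMeasurable fun p : V × V => r₀ p.2 p.1 :=
    (h.cont.comp continuous_swap).stronglyMeasurable
  exact this.integral_prod_right'.measurable

end Good

/-! ### The reversible measure and the pair measure -/

/-- The density `ν₀(v) e^{-|v|²}` of the reversible measure. -/
def dens (r₀ : V → V → ℝ) (v : V) : ℝ := nu0 r₀ v * Real.exp (-‖v‖ ^ 2)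

/-- The reversible measure `μ = ν₀(v) e^{-|v|²} dv`. -/
def mu (r₀ : V → V → ℝ) : Measure V := volume.withDensity fun v => ENNReal.ofReal (dens r₀ v)

/-- The symmetric measure `r₀(u,v) e^{-|v|²} dv du` on pairs `(v,u)`; both marginals are `mu`. -/
def pairM (r₀ : V → V → ℝ) : Measure (V × V) :=
  ((volume : Measure V).prod volume).withDensity
    fun p => ENNReal.ofReal (r₀ p.2 p.1 * Real.exp (-‖p.1‖ ^ 2))

namespace Good

variable {r₀ : V → V → ℝ} {C : ℝ}

lemma dens_pos (h : Good r₀ C) (v : V) : 0 < dens r₀ v :=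
  mul_pos (h.nu0_pos v) (Real.exp_pos _)

lemma measurable_dens (h : Good r₀ C) : Measurable (dens r₀) :=
  h.measurable_nu0.mul (by fun_prop)

lemma measurable_q (h : Good r₀ C) :
    Measurable fun p : V × V => r₀ p.2 p.1 * Real.exp (-‖p.1‖ ^ 2) :=
  ((h.cont.comp continuous_swap).mul (by fun_prop)).measurable

/-- Detailed balance is the symmetry of the pair density. -/
lemma q_symm (h : Good r₀ C) (u v : V) :
    r₀ u v * Real.exp (-‖v‖ ^ 2) = r₀ v u * Real.exp (-‖u‖ ^ 2) := by
  rw [h.db u v, mul_assoc, ← Real.exp_add]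
  ring_nf

lemma mp_fst (h : Good r₀ C) : MeasurePreserving Prod.fst (pairM r₀) (mu r₀) := by
  refine ⟨measurable_fst, ?_⟩
  ext s hs
  rw [Measure.map_apply measurable_fst hs, pairM, mu, withDensity_apply _ (measurable_fst hs),
    withDensity_apply _ hs, show (Prod.fst ⁻¹' s : Set (V × V)) = s ×ˢ Set.univ by ext; simp,
    ← Measure.prod_restrict, lintegral_prod _ h.measurable_q.ennreal_ofReal.aemeasurable]
  refine lintegral_congr fun v => ?_
  rw [Measure.restrict_univ, dens, nu0, ← integral_mul_const, ofReal_integral_eq_lintegral_ofReal]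
  · exact (h.integrable v).mul_const _
  · exact Eventually.of_forall fun u => mul_nonneg (h.nonneg _ _) (Real.exp_pos _).le

lemma mp_swap (h : Good r₀ C) : MeasurePreserving Prod.swap (pairM r₀) (pairM r₀) := by
  refine ⟨measurable_swap, ?_⟩
  ext s hs
  rw [Measure.map_apply measurable_swap hs, pairM, withDensity_apply _ (measurable_swap hs),
    withDensity_apply _ hs, ← lintegral_indicator (measurable_swap hs),
    ← lintegral_indicator hs, ← lintegral_prod_swap]
  refine lintegral_congr fun p => ?_
  by_cases hp : p ∈ s
  · rw [Set.indicator_of_mem hp, Set.indicator_of_mem (by simpa using hp)]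
    simp only [Prod.fst_swap, Prod.snd_swap]
    rw [h.q_symm]
  · rw [Set.indicator_of_notMem hp, Set.indicator_of_notMem (by simpa using hp)]

lemma mp_snd (h : Good r₀ C) : MeasurePreserving Prod.snd (pairM r₀) (mu r₀) :=
  h.mp_fst.comp h.mp_swap

lemma integrable_mu_iff (h : Good r₀ C) {E : Type*} [NormedAddCommGroup E] [NormedSpace ℝ E]
    {f : V → E} : Integrable f (mu r₀) ↔ Integrable fun v => dens r₀ v • f v := by
  rw [mu, integrable_withDensity_iff_integrable_smul' h.measurable_dens.ennreal_ofReal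
    (Eventually.of_forall fun v => ENNReal.ofReal_lt_top)]
  simp only [ENNReal.toReal_ofReal (h.dens_pos _).le]

lemma setIntegral_mu (h : Good r₀ C) {E : Type*} [NormedAddCommGroup E] [NormedSpace ℝ E]
    (f : V → E) {s : Set V} (hs : MeasurableSet s) :
    ∫ v in s, f v ∂(mu r₀) = ∫ v in s, dens r₀ v • f v := by
  rw [mu, setIntegral_withDensity_eq_setIntegral_toReal_smul h.measurable_dens.ennreal_ofReal
    (Eventually.of_forall fun v => ENNReal.ofReal_lt_top) _ hs]
  simp only [ENNReal.toReal_ofReal (h.dens_pos _).le]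

lemma ae_mu_iff (h : Good r₀ C) {p : V → Prop} : (∀ᵐ v ∂(mu r₀), p v) ↔ ∀ᵐ v, p v := by
  rw [mu, ae_withDensity_iff h.measurable_dens.ennreal_ofReal]
  simp [h.dens_pos]

lemma integrable_nu0_pow (h : Good r₀ C) {k : ℕ} (hk : k ≤ 3) :
    Integrable (fun v => nu0 r₀ v ^ k) (mu r₀) := by
  obtain ⟨C₁, hC₁, H⟩ := h.nu0_le
  rw [h.integrable_mu_iff]
  refine ((integrable_jap_pow (k := k + 1) (by omega)).const_mul (C₁ ^ (k + 1))).mono'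
    (h.measurable_dens.smul (h.measurable_nu0.pow_const _)).aestronglyMeasurable
    (Eventually.of_forall fun v => ?_)
  have := h.nu0_pos v
  rw [dens, smul_eq_mul, Real.norm_of_nonneg (by positivity)]
  calc nu0 r₀ v * Real.exp (-‖v‖ ^ 2) * nu0 r₀ v ^ k
      = nu0 r₀ v ^ (k + 1) * Real.exp (-‖v‖ ^ 2) := by ring
    _ ≤ (C₁ * jap v) ^ (k + 1) * Real.exp (-‖v‖ ^ 2) := by gcongr; exact H v
    _ = _ := by ring

lemma finite_mu (h : Good r₀ C) : IsFiniteMeasure (mu r₀) := by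
  have := h.integrable_nu0_pow (k := 0) (by norm_num)
  simp only [pow_zero] at this
  rw [integrable_const_iff] at this
  simpa using this

lemma finite_pairM (h : Good r₀ C) : IsFiniteMeasure (pairM r₀) := by
  have := h.finite_mu
  refine ⟨?_⟩
  rw [← Set.preimage_univ (f := (Prod.fst : V × V → V)),
    h.mp_fst.measure_preimage MeasurableSet.univ.nullMeasurableSet]
  exact measure_lt_top _ _

end Good

/-! ### The Markov operator and its Dirichlet form -/

namespace Good

variable {r₀ : V → V → ℝ} {C : ℝ}

/-- The isometry `F(v)` of `L²(μ)` into `L²` of the pair measure. -/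
def iota₁ (h : Good r₀ C) : Lp ℂ 2 (mu r₀) →ₗᵢ[ℂ] Lp ℂ 2 (pairM r₀) :=
  Lp.compMeasurePreservingₗᵢ ℂ Prod.fst h.mp_fst

/-- The isometry `F(u)` of `L²(μ)` into `L²` of the pair measure. -/
def iota₂ (h : Good r₀ C) : Lp ℂ 2 (mu r₀) →ₗᵢ[ℂ] Lp ℂ 2 (pairM r₀) :=
  Lp.compMeasurePreservingₗᵢ ℂ Prod.snd h.mp_snd

lemma iota₁_ae (h : Good r₀ C) (F : Lp ℂ 2 (mu r₀)) :
    h.iota₁ F =ᵐ[pairM r₀] fun p => F p.1 :=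
  Lp.coeFn_compMeasurePreserving F h.mp_fst

lemma iota₂_ae (h : Good r₀ C) (F : Lp ℂ 2 (mu r₀)) :
    h.iota₂ F =ᵐ[pairM r₀] fun p => F p.2 :=
  Lp.coeFn_compMeasurePreserving F h.mp_snd

/-- The Markov operator `P F(v) = ν₀(v)⁻¹ ∫ r₀(u,v) F(u) du` on `L²(μ)`, encoded as `ι₁† ι₂`;
see `markov_ae` for the integral formula. -/
def markov (h : Good r₀ C) : Lp ℂ 2 (mu r₀) →L[ℂ] Lp ℂ 2 (mu r₀) :=
  (ContinuousLinearMap.adjoint h.iota₁.toContinuousLinearMap) ∘L h.iota₂.toContinuousLinearMap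

lemma inner_markov (h : Good r₀ C) (G F : Lp ℂ 2 (mu r₀)) :
    ⟪G, h.markov F⟫_ℂ = ⟪h.iota₁ G, h.iota₂ F⟫_ℂ := by
  simp [markov, ContinuousLinearMap.adjoint_inner_right]

lemma inner_iota (h : Good r₀ C) (G F : Lp ℂ 2 (mu r₀)) :
    ⟪h.iota₁ G, h.iota₂ F⟫_ℂ = ∫ p, ⟪G p.1, F p.2⟫_ℂ ∂(pairM r₀) := by
  rw [L2.inner_def]
  refine integral_congr_ae ?_
  filter_upwards [h.iota₁_ae G, h.iota₂_ae F] with p h1 h2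
  rw [h1, h2]

lemma inner_iota' (h : Good r₀ C) (G F : Lp ℂ 2 (mu r₀)) :
    ⟪h.iota₂ G, h.iota₁ F⟫_ℂ = ∫ p, ⟪G p.2, F p.1⟫_ℂ ∂(pairM r₀) := by
  rw [L2.inner_def]
  refine integral_congr_ae ?_
  filter_upwards [h.iota₂_ae G, h.iota₁_ae F] with p h1 h2
  rw [h1, h2]

lemma inner_iota_swap (h : Good r₀ C) (G F : Lp ℂ 2 (mu r₀)) :
    ⟪h.iota₂ G, h.iota₁ F⟫_ℂ = ⟪h.iota₁ G, h.iota₂ F⟫_ℂ := by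
  rw [inner_iota, inner_iota']
  exact h.mp_swap.integral_comp (MeasurableEquiv.prodComm (α := V) (β := V)).measurableEmbedding
    fun p => ⟪G p.1, F p.2⟫_ℂ

lemma markov_symm (h : Good r₀ C) (G F : Lp ℂ 2 (mu r₀)) :
    ⟪h.markov G, F⟫_ℂ = ⟪G, h.markov F⟫_ℂ := by
  rw [← inner_conj_symm, inner_markov, inner_markov, inner_conj_symm, inner_iota_swap]

/-- The Dirichlet form of `1 - P` is half the squared norm of the difference `F(v) - F(u)`. -/
lemma dirichlet (h : Good r₀ C) (F : Lp ℂ 2 (mu r₀)) :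
    ‖h.iota₁ F - h.iota₂ F‖ ^ 2 = 2 * (⟪F, F - h.markov F⟫_ℂ).re := by
  have h1 := @norm_sub_sq ℂ _ _ _ _ (h.iota₁ F) (h.iota₂ F)
  rw [h1, LinearIsometry.norm_map, LinearIsometry.norm_map, inner_sub_right, inner_markov,
    inner_self_eq_norm_sq_to_K]
  have h2 : ((RCLike.ofReal ‖F‖ : ℂ) ^ 2).re = ‖F‖ ^ 2 := by
    simp only [Complex.coe_algebraMap]
    norm_cast
  rw [Complex.sub_re, h2, RCLike.re_to_complex]
  ring

lemma norm_sub_markov_le (h : Good r₀ C) (F : Lp ℂ 2 (mu r₀)) :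
    ‖F - h.markov F‖ ≤ ‖h.iota₁ F - h.iota₂ F‖ := by
  have h1 : F - h.markov F = (ContinuousLinearMap.adjoint h.iota₁.toContinuousLinearMap)
      (h.iota₁ F - h.iota₂ F) := by
    rw [map_sub]
    congr 1
    refine ext_inner_left ℂ fun G => ?_
    rw [ContinuousLinearMap.adjoint_inner_right]
    simp
  rw [h1]
  refine (ContinuousLinearMap.le_opNorm _ _).trans ?_
  rw [LinearIsometryEquiv.norm_map]
  refine mul_le_of_le_one_left (norm_nonneg _) ?_
  exact h.iota₁.norm_toContinuousLinearMap_le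

lemma integrable_markov_integrand (h : Good r₀ C) (F : Lp ℂ 2 (mu r₀)) :
    Integrable (fun p : V × V => (r₀ p.2 p.1 * Real.exp (-‖p.1‖ ^ 2)) • F p.2)
      ((volume : Measure V).prod volume) := by
  have := h.finite_pairM
  have := h.finite_mu
  have h1 : Integrable (fun p : V × V => F p.2) (pairM r₀) :=
    h.mp_snd.integrable_comp_of_integrable ((Lp.memLp F).integrable (by norm_num))
  rw [pairM, integrable_withDensity_iff_integrable_smul' h.measurable_q.ennreal_ofReal
    (Eventually.of_forall fun v => ENNReal.ofReal_lt_top)] at h1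
  refine h1.congr (Eventually.of_forall fun p => ?_)
  simp only
  rw [ENNReal.toReal_ofReal (mul_nonneg (h.nonneg _ _) (Real.exp_pos _).le)]

lemma markov_ae (h : Good r₀ C) (F : Lp ℂ 2 (mu r₀)) :
    h.markov F =ᵐ[mu r₀] fun v => ((nu0 r₀ v)⁻¹ : ℝ) • ∫ u, r₀ u v • F u := by
  have hfin := h.finite_mu
  have hfin' := h.finite_pairM
  have hI := h.integrable_markov_integrand F
  have key : ∀ v, dens r₀ v • (((nu0 r₀ v)⁻¹ : ℝ) • ∫ u, r₀ u v • F u)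
      = ∫ u, (r₀ u v * Real.exp (-‖v‖ ^ 2)) • F u := fun v => by
    rw [smul_smul, dens, mul_right_comm, mul_inv_cancel₀ (h.nu0_pos v).ne', one_mul,
      ← integral_smul]
    refine integral_congr_ae (Eventually.of_forall fun u => ?_)
    simp only [smul_smul]
    rw [mul_comm]
  refine Integrable.ae_eq_of_forall_setIntegral_eq _ _ ((Lp.memLp _).integrable (by norm_num))
    ?_ fun s hs hμ => ?_
  · rw [h.integrable_mu_iff]
    simp only [key]
    exact hI.integral_prod_left
  · rw [h.setIntegral_mu (fun v => ((nu0 r₀ v)⁻¹ : ℝ) • ∫ u, r₀ u v • F u) hs]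
    simp only [key]
    rw [← L2.inner_indicatorConstLp_one (𝕜 := ℂ) hs hμ.ne, h.inner_markov]
    have h1 : h.iota₁ (indicatorConstLp 2 hs hμ.ne (1 : ℂ)) =
      indicatorConstLp 2 (h.mp_fst.measurable hs)
        (by rwa [h.mp_fst.measure_preimage hs.nullMeasurableSet, ← lt_top_iff_ne_top]) (1 : ℂ) :=
      Lp.indicatorConstLp_compMeasurePreserving hs hμ.ne (1 : ℂ) h.mp_fst
    rw [h1, L2.inner_indicatorConstLp_one]
    rw [setIntegral_congr_ae (g := fun p => F p.2) (h.mp_fst.measurable hs)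
      ((h.iota₂_ae F).mono fun p hp _ => hp)]
    rw [pairM, setIntegral_withDensity_eq_setIntegral_toReal_smul h.measurable_q.ennreal_ofReal
      (Eventually.of_forall fun v => ENNReal.ofReal_lt_top) _ (h.mp_fst.measurable hs),
      show (Prod.fst ⁻¹' s : Set (V × V)) = s ×ˢ Set.univ by ext; simp]
    have h2 : ∀ p : V × V,
        (ENNReal.ofReal (r₀ p.2 p.1 * Real.exp (-‖p.1‖ ^ 2))).toReal • F p.2 =
        (r₀ p.2 p.1 * Real.exp (-‖p.1‖ ^ 2)) • F p.2 := fun p => by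
      rw [ENNReal.toReal_ofReal (mul_nonneg (h.nonneg _ _) (Real.exp_pos _).le)]
    simp only [h2]
    rw [setIntegral_prod _ hI.integrableOn]
    simp

end Good

/-! ### The spectral gap -/

lemma enorm_sq_eq_lintegral {α : Type*} [MeasurableSpace α] {m : Measure α} (f : Lp ℂ 2 m) :
    ‖f‖ₑ ^ 2 = ∫⁻ x, ‖f x‖ₑ ^ 2 ∂m := by
  have := eLpNorm_nnreal_pow_eq_lintegral (μ := m) (f := f) (p := 2) (by norm_num)
  rw [Lp.enorm_def]
  simpa using this

namespace Good

variable {r₀ : V → V → ℝ} {C : ℝ}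

lemma lintegral_mu (h : Good r₀ C) {f : V → ENNReal} (hf : Measurable f) :
    ∫⁻ v, f v ∂(mu r₀) = ∫⁻ v, ENNReal.ofReal (dens r₀ v) * f v := by
  rw [mu, lintegral_withDensity_eq_lintegral_mul _ h.measurable_dens.ennreal_ofReal hf]
  rfl

lemma pair_density_ge (h : Good r₀ C) : ∃ κ > 0, ∀ u v : V,
    κ * ((jap u)⁻¹ * Real.exp (-‖u‖ ^ 2)) * dens r₀ v ≤ r₀ u v * Real.exp (-‖v‖ ^ 2) := by
  obtain ⟨C₁, hC₁, H⟩ := h.nu0_le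
  have hC := h.pos
  refine ⟨(2 * C)⁻¹ * C₁⁻¹, by positivity, fun u v => ?_⟩
  have h1 := h.ge u v
  have h2 := H v
  have hu := jap_pos u
  calc (2 * C)⁻¹ * C₁⁻¹ * ((jap u)⁻¹ * Real.exp (-‖u‖ ^ 2)) * dens r₀ v
      ≤ (2 * C)⁻¹ * C₁⁻¹ * ((jap u)⁻¹ * Real.exp (-‖u‖ ^ 2)) *
        (C₁ * jap v * Real.exp (-‖v‖ ^ 2)) := by unfold dens; gcongr
    _ = ((2 * C)⁻¹ * ((jap u)⁻¹ * Real.exp (-‖u‖ ^ 2)) * jap v) * Real.exp (-‖v‖ ^ 2) := by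
        field_simp
    _ ≤ _ := by gcongr

/-- Spectral gap: the Dirichlet form controls the `L²(μ)`-distance to a constant. The pair density
dominates a product density, so the Dirichlet form bounds an average over `u` of
`‖F - F(u)‖²`, and some value `F(u)` does at least as well as the average. -/
lemma gap (h : Good r₀ C) : ∃ K > 0, ∀ F : Lp ℂ 2 (mu r₀), ∃ a : ℂ,
    ∀ G : Lp ℂ 2 (mu r₀), (G =ᵐ[mu r₀] fun v => F v - a) →
      ‖G‖ ≤ K * ‖h.iota₁ F - h.iota₂ F‖ := by
  obtain ⟨κ, hκ, H⟩ := h.pair_density_ge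
  set ρ : V → ℝ := fun u => (jap u)⁻¹ * Real.exp (-‖u‖ ^ 2) with hρ
  have hρm : Measurable ρ :=
    ((continuous_jap.inv₀ fun u => (jap_pos u).ne').mul (by fun_prop)).measurable
  have hρ0 : ∀ u, 0 < ρ u := fun u => mul_pos (inv_pos.mpr (jap_pos u)) (Real.exp_pos _)
  set A : ℝ := κ * ∫ u, ρ u with hA
  have hA0 : 0 < A := mul_pos hκ integral_rho_pos
  refine ⟨(Real.sqrt A)⁻¹, by positivity, fun F => ?_⟩
  have hFm : Measurable F := (Lp.stronglyMeasurable F).measurable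
  set φ : V → ENNReal := fun u => ∫⁻ v, ‖F v - F u‖ₑ ^ 2 ∂(mu r₀) with hφ
  have hmm : Measurable fun p : V × V => ‖F p.2 - F p.1‖ₑ ^ 2 :=
    ((hFm.comp measurable_snd).sub (hFm.comp measurable_fst)).enorm.pow_const 2
  have hfin := h.finite_mu
  have hφm : Measurable φ := hmm.lintegral_prod_right'
  set ρM : Measure V := volume.withDensity fun u => ENNReal.ofReal (κ * ρ u) with hR
  have hRu : ρM Set.univ = ENNReal.ofReal A := by
    rw [hR, withDensity_apply _ MeasurableSet.univ, Measure.restrict_univ, hA,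
      ← integral_const_mul, ofReal_integral_eq_lintegral_ofReal (integrable_rho.const_mul κ)
        (Eventually.of_forall fun u => (mul_pos hκ (hρ0 u)).le)]
  have hR0 : ρM ≠ 0 := by
    intro h0
    rw [h0] at hRu
    simp at hRu
    linarith
  have hRfin : IsFiniteMeasure ρM := ⟨by rw [hRu]; exact ENNReal.ofReal_lt_top⟩
  obtain ⟨u, hu⟩ := exists_le_laverage hR0 hφm.aemeasurable
  refine ⟨F u, fun G hG => ?_⟩
  have h1 : ∫⁻ u, φ u ∂ρM ≤ ‖h.iota₁ F - h.iota₂ F‖ₑ ^ 2 := by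
    have e1 : ‖h.iota₁ F - h.iota₂ F‖ₑ ^ 2
        = ∫⁻ p, ‖F p.1 - F p.2‖ₑ ^ 2 ∂(pairM r₀) := by
      rw [enorm_sq_eq_lintegral]
      refine lintegral_congr_ae ?_
      filter_upwards [h.iota₁_ae F, h.iota₂_ae F, Lp.coeFn_sub (h.iota₁ F) (h.iota₂ F)]
        with p a1 a2 a3
      rw [a3, Pi.sub_apply, a1, a2]
    have hmm' : Measurable fun p : V × V => ‖F p.1 - F p.2‖ₑ ^ 2 :=
      ((hFm.comp measurable_fst).sub (hFm.comp measurable_snd)).enorm.pow_const 2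
    rw [e1, pairM, lintegral_withDensity_eq_lintegral_mul _ h.measurable_q.ennreal_ofReal hmm',
      lintegral_prod_symm _ (h.measurable_q.ennreal_ofReal.mul hmm').aemeasurable,
      hR, lintegral_withDensity_eq_lintegral_mul _ (hρm.const_mul κ).ennreal_ofReal hφm]
    refine lintegral_mono fun u => ?_
    simp only [Pi.mul_apply, hφ]
    have hm2 : Measurable fun v : V => ‖F v - F u‖ₑ ^ 2 := (hFm.sub_const _).enorm.pow_const 2
    rw [h.lintegral_mu hm2,
      ← lintegral_const_mul _ (by exact h.measurable_dens.ennreal_ofReal.mul hm2)]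
    refine lintegral_mono fun v => ?_
    simp only
    rw [← mul_assoc, ← ENNReal.ofReal_mul (mul_pos hκ (hρ0 u)).le]
    gcongr ENNReal.ofReal ?_ * _
    exact H u v
  have h2 : ‖G‖ₑ ^ 2 = φ u := by
    rw [enorm_sq_eq_lintegral]
    refine lintegral_congr_ae ?_
    filter_upwards [hG] with v hv
    rw [hv]
  rw [laverage_eq, hRu] at hu
  have h3 : ‖G‖ₑ ^ 2 ≤ ‖h.iota₁ F - h.iota₂ F‖ₑ ^ 2 / ENNReal.ofReal A := by
    rw [h2]
    exact hu.trans (by gcongr)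
  have h4 : ‖G‖ ^ 2 ≤ ‖h.iota₁ F - h.iota₂ F‖ ^ 2 / A := by
    rw [← ofReal_norm, ← ofReal_norm, ← ENNReal.ofReal_pow (norm_nonneg _),
      ← ENNReal.ofReal_pow (norm_nonneg _), ← ENNReal.ofReal_div_of_pos hA0] at h3
    exact (ENNReal.ofReal_le_ofReal_iff (by positivity)).mp h3
  refine abs_le_of_sq_le_sq' (h4.trans_eq ?_) (by positivity) |>.2
  rw [mul_pow, inv_pow, Real.sq_sqrt hA0.le, div_eq_inv_mul]

end Good

/-! ### Transport and operators on `L²` -/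

/-- The linear form `v ↦ n·v`. -/
def ell (n : Fin 3 → ℤ) (v : V) : ℝ := ∑ i : Fin 3, (n i : ℝ) * v i

lemma ell_eq_inner (n : Fin 3 → ℤ) (v : V) : ell n v = ⟪nV n, v⟫_ℝ := by
  simp [ell, nV, PiLp.inner_apply, mul_comm]

lemma ell_add (n : Fin 3 → ℤ) (v w : V) : ell n (v + w) = ell n v + ell n w := by
  simp only [ell_eq_inner, inner_add_right]

lemma abs_ell_le (n : Fin 3 → ℤ) (v : V) : |ell n v| ≤ ‖nV n‖ * ‖v‖ := by
  rw [ell_eq_inner]; exact abs_real_inner_le_norm _ _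

lemma continuous_ell (n : Fin 3 → ℤ) : Continuous (ell n) := by
  unfold ell; fun_prop

lemma one_le_norm_nV {n : Fin 3 → ℤ} (hn : n ≠ 0) : 1 ≤ ‖nV n‖ := by
  obtain ⟨i, hi⟩ := Function.ne_iff.mp hn
  have h1 : ‖(nV n) i‖ ≤ ‖nV n‖ := PiLp.norm_apply_le (nV n) i
  refine le_trans ?_ h1
  have : (1 : ℤ) ≤ |n i| := Int.one_le_abs hi
  simp only [nV, WithLp.equiv_symm_apply, Real.norm_eq_abs]
  exact_mod_cast this

lemma norm_sq_eq_integral {α : Type*} [MeasurableSpace α] {m : Measure α} (f : Lp ℂ 2 m) :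
    ‖f‖ ^ 2 = ∫ x, ‖f x‖ ^ 2 ∂m := by
  have h1 := @inner_self_eq_norm_sq ℂ _ _ _ _ f
  rw [← h1, L2.inner_def, RCLike.re_to_complex, ← RCLike.re_to_complex, ← integral_re]
  · refine integral_congr_ae (Eventually.of_forall fun x => ?_)
    exact inner_self_eq_norm_sq (𝕜 := ℂ) (f x)
  · exact L2.integrable_inner f f

lemma integrable_norm_sq {α : Type*} [MeasurableSpace α] {m : Measure α} (f : Lp ℂ 2 m) :
    Integrable (fun x => ‖f x‖ ^ 2) m :=
  (memLp_two_iff_integrable_sq_norm (Lp.aestronglyMeasurable f)).mp (Lp.memLp f)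

/-- Multiplication by a bounded measurable function, as an operator on `L²`. -/
lemma exists_mulOp {α : Type*} [MeasurableSpace α] {m : Measure α} {φ : α → ℂ}
    (hφ : Measurable φ) {K : ℝ} (hK : ∀ x, ‖φ x‖ ≤ K) :
    ∃ M : Lp ℂ 2 m →L[ℂ] Lp ℂ 2 m, ∀ F, M F =ᵐ[m] fun x => φ x * F x := by
  have hm : MemLp φ ⊤ m := memLp_top_of_bound hφ.aestronglyMeasurable K (Eventually.of_forall hK)
  refine ⟨(ContinuousLinearMap.mul ℂ ℂ).holderL m ⊤ 2 2 (hm.toLp φ), fun F => ?_⟩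
  have h1 := (ContinuousLinearMap.mul ℂ ℂ).coeFn_holder (r := 2) (hm.toLp φ) F
  filter_upwards [h1, hm.coeFn_toLp] with x h2 h3
  refine h2.trans ?_
  rw [h3]
  rfl

/-- An operator which is bounded below and has an injective adjoint is surjective. -/
lemma surjective_of_bddBelow {H : Type*} [NormedAddCommGroup H] [InnerProductSpace ℂ H]
    [CompleteSpace H] (A A' : H →L[ℂ] H) (hadj : ∀ x y, ⟪A' x, y⟫_ℂ = ⟪x, A y⟫_ℂ)
    {K : ℝ} (hK : 0 ≤ K) (hA : ∀ x, ‖x‖ ≤ K * ‖A x‖) (hA' : ∀ x, A' x = 0 → x = 0) :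
    Function.Surjective A := by
  have hanti : AntilipschitzWith ⟨K, hK⟩ A :=
    AddMonoidHomClass.antilipschitz_of_bound A hA
  have hcl : IsClosed (LinearMap.range A.toLinearMap : Set H) := by
    have hr : (LinearMap.range A.toLinearMap : Set H) = Set.range A := by ext; simp
    rw [hr]
    exact hanti.isClosed_range A.uniformContinuous
  have hbot : (LinearMap.range A.toLinearMap)ᗮ = ⊥ := by
    rw [Submodule.eq_bot_iff]
    intro x hx
    refine hA' x (ext_inner_right ℂ fun y => ?_)
    rw [hadj, inner_zero_left]
    rw [Submodule.mem_orthogonal'] at hx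
    exact hx _ ⟨y, rfl⟩
  have hcomp : CompleteSpace (LinearMap.range A.toLinearMap) := hcl.completeSpace_coe
  have htop : LinearMap.range A.toLinearMap = ⊤ := Submodule.orthogonal_eq_bot_iff.mp hbot
  exact LinearMap.range_eq_top.mp htop

namespace Good

variable {r₀ : V → V → ℝ} {C : ℝ}

/-- The function `n·v - s` is not small compared with `ν₀` on a set whose `μ`-mass is bounded below
uniformly in `n ≠ 0` and `s`: translating by `n/|n|²` changes `n·v` by `1`, so for each point
`v` of the unit ball, `v` or its translate belongs to that set. -/
lemma spread (h : Good r₀ C) : ∃ δ > 0, ∃ κ > 0, ∀ n : Fin 3 → ℤ, n ≠ 0 → ∀ s : ℝ,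
    κ ≤ (mu r₀).real {v | δ * nu0 r₀ v ≤ |ell n v - s|} := by
  obtain ⟨C₁, hC₁, H1⟩ := h.nu0_le
  obtain ⟨c₁, hc₁, H2⟩ := h.le_nu0
  have hfin := h.finite_mu
  set β : ENNReal := ENNReal.ofReal (c₁ * Real.exp (-4)) * volume (Metric.closedBall (0 : V) 1)
    with hβ
  have hβ0 : 0 < β := by
    refine ENNReal.mul_pos ?_ (Metric.measure_closedBall_pos _ _ one_pos).ne'
    simp only [ne_eq, ENNReal.ofReal_eq_zero, not_le]
    positivity
  have hβt : β < ⊤ := ENNReal.mul_lt_top ENNReal.ofReal_lt_top measure_closedBall_lt_top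
  refine ⟨1 / (6 * C₁), by positivity, β.toReal / 2,
    half_pos (ENNReal.toReal_pos hβ0.ne' hβt.ne), fun n hn s => ?_⟩
  set δ := 1 / (6 * C₁) with hδ
  have hn1 := one_le_norm_nV hn
  set S : Set V := {v | δ * nu0 r₀ v ≤ |ell n v - s|} with hS
  have hSm : MeasurableSet S := measurableSet_le (h.measurable_nu0.const_mul δ)
    (((continuous_ell n).measurable.sub_const s).abs)
  set S2 := S ∩ Metric.closedBall (0 : V) 2 with hS2
  have hS2m : MeasurableSet S2 := hSm.inter measurableSet_closedBall
  set e : V := (‖nV n‖ ^ 2)⁻¹ • nV n with he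
  have he1 : ell n e = 1 := by
    rw [ell_eq_inner, he, inner_smul_right, real_inner_self_eq_norm_sq]
    field_simp
  have he2 : ‖e‖ ≤ 1 := by
    rw [he, norm_smul, norm_inv, norm_pow, norm_norm]
    rw [show (‖nV n‖ ^ 2)⁻¹ * ‖nV n‖ = ‖nV n‖⁻¹ by field_simp]
    exact inv_le_one_of_one_le₀ hn1
  -- On the ball of radius `2` the threshold `δ ν₀` is at most `1/2`.
  have hsm : ∀ v : V, ‖v‖ ≤ 2 → v ∉ S → |ell n v - s| < 1 / 2 := fun v hv hvS => by
    have h1 : |ell n v - s| < δ * nu0 r₀ v := not_le.mp hvS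
    have h2 : nu0 r₀ v ≤ C₁ * 3 := (H1 v).trans (by gcongr; linarith [jap_le v])
    calc |ell n v - s| < δ * nu0 r₀ v := h1
      _ ≤ δ * (C₁ * 3) := by gcongr
      _ = 1 / 2 := by rw [hδ]; field_simp; norm_num
  have hcov : Metric.closedBall (0 : V) 1 ⊆ S2 ∪ (fun v => v + e) ⁻¹' S2 := by
    intro v hv
    have hv1 : ‖v‖ ≤ 1 := by simpa using hv
    have hv2 : ‖v + e‖ ≤ 2 := (norm_add_le _ _).trans (by linarith)
    by_contra hcon
    simp only [Set.mem_union, Set.mem_preimage, not_or, hS2, Set.mem_inter_iff,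
      mem_closedBall_zero_iff, not_and'] at hcon
    have a1 := hsm v (by linarith) (hcon.1 (by linarith))
    have a2 := hsm (v + e) hv2 (hcon.2 hv2)
    rw [ell_add, he1] at a2
    rw [abs_lt] at a1 a2
    linarith
  have hvol : volume (Metric.closedBall (0 : V) 1) ≤ 2 * volume S2 := by
    refine (measure_mono hcov).trans ((measure_union_le _ _).trans ?_)
    rw [measure_preimage_add_right, two_mul]
  have hmu : ENNReal.ofReal (c₁ * Real.exp (-4)) * volume S2 ≤ mu r₀ S := by
    refine le_trans ?_ (measure_mono (Set.inter_subset_left : S2 ⊆ S))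
    rw [mu, withDensity_apply _ hS2m, ← setLIntegral_const]
    refine setLIntegral_mono' hS2m fun v hv => ENNReal.ofReal_le_ofReal ?_
    have hv2 : ‖v‖ ≤ 2 := by simpa using hv.2
    unfold dens
    have h1 : c₁ ≤ nu0 r₀ v :=
      le_trans (le_mul_of_one_le_right hc₁.le (one_le_jap v)) (H2 v)
    have h3 : ‖v‖ ^ 2 ≤ 4 := by nlinarith [norm_nonneg v]
    exact mul_le_mul h1 (Real.exp_le_exp.mpr (by linarith)) (Real.exp_pos _).le (h.nu0_pos v).le
  have hfinal : β ≤ 2 * mu r₀ S := by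
    calc β ≤ ENNReal.ofReal (c₁ * Real.exp (-4)) * (2 * volume S2) := by rw [hβ]; gcongr
      _ = 2 * (ENNReal.ofReal (c₁ * Real.exp (-4)) * volume S2) := by ring
      _ ≤ _ := by gcongr
  have h2 : (2 * mu r₀ S).toReal = 2 * (mu r₀ S).toReal := by simp
  have := ENNReal.toReal_mono (by finiteness) hfinal
  rw [h2] at this
  rw [Measure.real]
  linarith

end Good

/-! ### Coercivity for small real part -/

/-- The symbol `ν₀(v) + i n·v - ζ`. -/
def symb (r₀ : V → V → ℝ) (n : Fin 3 → ℤ) (ζ : ℂ) (v : V) : ℂ :=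
  (nu0 r₀ v : ℝ) + Complex.I * ((ell n v : ℝ) : ℂ) - ζ

lemma symb_re (r₀ : V → V → ℝ) (n : Fin 3 → ℤ) (ζ : ℂ) (v : V) :
    (symb r₀ n ζ v).re = nu0 r₀ v - ζ.re := by
  simp [symb]

lemma symb_im (r₀ : V → V → ℝ) (n : Fin 3 → ℤ) (ζ : ℂ) (v : V) :
    (symb r₀ n ζ v).im = ell n v - ζ.im := by
  simp [symb]

namespace Good

variable {r₀ : V → V → ℝ} {C : ℝ}

lemma measurable_symb (h : Good r₀ C) (n : Fin 3 → ℤ) (ζ : ℂ) : Measurable (symb r₀ n ζ) := by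
  have h1 := h.measurable_nu0
  have h2 := (continuous_ell n).measurable
  unfold symb
  fun_prop

/-- Control of `F` by the Dirichlet form and by the transport part `W = ((i n·v - ζ)/ν₀) F`: the
Dirichlet form controls the distance of `F` to a constant `a`, and `|a|` is controlled by `W` on
the set where `|n·v - Im ζ| ≥ δ ν₀`. -/
lemma transport_control (h : Good r₀ C) : ∃ A > 0, ∃ A' > 0, ∀ n : Fin 3 → ℤ, n ≠ 0 → ∀ ζ : ℂ,
    ∀ F W : Lp ℂ 2 (mu r₀),
    (W =ᵐ[mu r₀] fun v => ((symb r₀ n ζ v - (nu0 r₀ v : ℝ)) / (nu0 r₀ v : ℝ)) * F v) →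
    ‖F‖ ≤ A * ‖W‖ + A' * ‖h.iota₁ F - h.iota₂ F‖ := by
  have hfin := h.finite_mu
  obtain ⟨δ, hδ, κ, hκ, hS⟩ := h.spread
  obtain ⟨K, hK, hgap⟩ := h.gap
  set m : ℝ := (mu r₀).real Set.univ ^ (1 / (2 : ENNReal).toReal) with hm
  have hm0 : 0 ≤ m := by positivity
  set t : ℝ := √(2 / κ) with ht
  have ht0 : 0 < t := by positivity
  refine ⟨(m * t + 1) / δ, by positivity, (m * t + 1) * K, by positivity, fun n hn ζ F W hW => ?_⟩
  obtain ⟨a, ha⟩ := hgap F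
  set G : Lp ℂ 2 (mu r₀) := F - Lp.const 2 (mu r₀) a with hG
  have hGae : G =ᵐ[mu r₀] fun v => F v - a := by
    filter_upwards [Lp.coeFn_sub F (Lp.const 2 (mu r₀) a), Lp.coeFn_const 2 (mu r₀) a] with v h1 h2
    rw [hG, h1, Pi.sub_apply, h2]
    rfl
  have hGn := ha G hGae
  set S : Set V := {v | δ * nu0 r₀ v ≤ |ell n v - ζ.im|} with hSdef
  have hSm : MeasurableSet S := measurableSet_le (h.measurable_nu0.const_mul δ)
    (((continuous_ell n).measurable.sub_const _).abs)
  have hpt : ∀ᵐ v ∂(mu r₀), v ∈ S → ‖a‖ ^ 2 ≤ 2 * δ⁻¹ ^ 2 * ‖W v‖ ^ 2 + 2 * ‖G v‖ ^ 2 := by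
    filter_upwards [hGae, hW] with v h1 h2 hv
    have hν := h.nu0_pos v
    have e1 : ‖F v‖ ≤ δ⁻¹ * ‖W v‖ := by
      rw [h2, norm_mul, norm_div, Complex.norm_real, Real.norm_of_nonneg hν.le, inv_mul_eq_div,
        le_div_iff₀ hδ, mul_comm]
      gcongr
      rw [le_div_iff₀ hν]
      refine (le_trans hv ?_)
      refine le_trans (le_of_eq ?_) (Complex.abs_im_le_norm _)
      rw [Complex.sub_im, symb_im, Complex.ofReal_im, sub_zero]
    have e2 : ‖a‖ ≤ δ⁻¹ * ‖W v‖ + ‖G v‖ := by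
      calc ‖a‖ = ‖F v - G v‖ := by rw [h1]; simp
        _ ≤ ‖F v‖ + ‖G v‖ := norm_sub_le _ _
        _ ≤ _ := by gcongr
    calc ‖a‖ ^ 2 ≤ (δ⁻¹ * ‖W v‖ + ‖G v‖) ^ 2 := by gcongr
      _ ≤ _ := by nlinarith [sq_nonneg (δ⁻¹ * ‖W v‖ - ‖G v‖)]
  have hint : Integrable (fun v => 2 * δ⁻¹ ^ 2 * ‖W v‖ ^ 2 + 2 * ‖G v‖ ^ 2) (mu r₀) :=
    ((integrable_norm_sq W).const_mul _).add ((integrable_norm_sq G).const_mul _)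
  have hsq : κ * ‖a‖ ^ 2 ≤ 2 * (δ⁻¹ * ‖W‖ + ‖G‖) ^ 2 := by
    calc κ * ‖a‖ ^ 2 ≤ (mu r₀).real S * ‖a‖ ^ 2 := by gcongr; exact hS n hn ζ.im
      _ = ∫ v in S, ‖a‖ ^ 2 ∂(mu r₀) := by rw [setIntegral_const, smul_eq_mul]
      _ ≤ ∫ v in S, (2 * δ⁻¹ ^ 2 * ‖W v‖ ^ 2 + 2 * ‖G v‖ ^ 2) ∂(mu r₀) :=
        setIntegral_mono_on_ae (integrable_const _).integrableOn hint.integrableOn hSm hpt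
      _ ≤ ∫ v, (2 * δ⁻¹ ^ 2 * ‖W v‖ ^ 2 + 2 * ‖G v‖ ^ 2) ∂(mu r₀) :=
        setIntegral_le_integral hint (Eventually.of_forall fun v => by positivity)
      _ = 2 * δ⁻¹ ^ 2 * ‖W‖ ^ 2 + 2 * ‖G‖ ^ 2 := by
        rw [integral_add ((integrable_norm_sq W).const_mul _) ((integrable_norm_sq G).const_mul _),
          integral_const_mul, integral_const_mul, norm_sq_eq_integral, norm_sq_eq_integral]
      _ ≤ _ := by
        have : 0 ≤ δ⁻¹ * ‖W‖ * ‖G‖ := by positivity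
        nlinarith
  have ha1 : ‖a‖ ≤ t * (δ⁻¹ * ‖W‖ + ‖G‖) := by
    refine le_of_sq_le_sq ?_ (by positivity)
    rw [mul_pow, ht, Real.sq_sqrt (by positivity), div_mul_eq_mul_div, le_div_iff₀ hκ]
    linarith
  have hF : ‖F‖ ≤ ‖a‖ * m + ‖G‖ := by
    have e : F = Lp.const 2 (mu r₀) a + G := by rw [hG]; abel
    calc ‖F‖ = ‖Lp.const 2 (mu r₀) a + G‖ := by rw [← e]
      _ ≤ ‖Lp.const 2 (mu r₀) a‖ + ‖G‖ := norm_add_le _ _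
      _ ≤ _ := by gcongr; exact Lp.norm_const_le _ _ _
  calc ‖F‖ ≤ (t * (δ⁻¹ * ‖W‖ + ‖G‖)) * m + ‖G‖ := hF.trans (by gcongr)
    _ ≤ (m * t + 1) / δ * ‖W‖ + (m * t + 1) * ‖G‖ := by
      have : 0 ≤ δ⁻¹ * ‖W‖ := by positivity
      rw [div_eq_mul_inv]
      linarith
    _ ≤ _ := by rw [mul_assoc _ K]; gcongr

/-- Coercivity of `F ↦ ((ν₀ + i n·v - ζ)/ν₀) F - P F` for `Re ζ` at most a small constant. -/
lemma coercive_left (h : Good r₀ C) {c : ℝ} (hc : 0 < c) (hν : ∀ v, c ≤ nu0 r₀ v) :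
    ∃ Θ > 0, ∃ L > 0, ∀ n : Fin 3 → ℤ, n ≠ 0 → ∀ ζ : ℂ, ζ.re ≤ Θ → ∀ F E : Lp ℂ 2 (mu r₀),
    (E =ᵐ[mu r₀] fun v => (symb r₀ n ζ v / (nu0 r₀ v : ℝ)) * F v) →
    ‖F‖ ≤ L * ‖E - h.markov F‖ := by
  obtain ⟨A, hA, A', hA', H⟩ := h.transport_control
  set B := A + A' with hB
  have hB0 : 0 < B := by positivity
  refine ⟨c / (16 * B ^ 2), by positivity, 2 * A + 4 * B ^ 2, by positivity,
    fun n hn ζ hζ F E hE => ?_⟩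
  set η := E - h.markov F with hη
  set D := ‖h.iota₁ F - h.iota₂ F‖ with hD
  set W := E - F with hW
  have hWae : W =ᵐ[mu r₀]
      fun v => ((symb r₀ n ζ v - (nu0 r₀ v : ℝ)) / (nu0 r₀ v : ℝ)) * F v := by
    filter_upwards [Lp.coeFn_sub E F, hE] with v h1 h2
    have : ((nu0 r₀ v : ℝ) : ℂ) ≠ 0 := Complex.ofReal_ne_zero.mpr (h.nu0_pos v).ne'
    rw [hW, h1, Pi.sub_apply, h2]
    field_simp
  have h1 := H n hn ζ F W hWae
  have hWη : W = η - (F - h.markov F) := by rw [hW, hη]; abel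
  have h2 : ‖W‖ ≤ ‖η‖ + D := by
    rw [hWη]
    exact (norm_sub_le _ _).trans (by gcongr; exact h.norm_sub_markov_le F)
  have h3 : D ^ 2 = 2 * (⟪F, η⟫_ℂ).re - 2 * (⟪F, W⟫_ℂ).re := by
    have e := inner_sub_right (𝕜 := ℂ) F η (F - h.markov F)
    rw [hD, h.dirichlet, hWη, e, Complex.sub_re]
    ring
  have h4 : (⟪F, η⟫_ℂ).re ≤ ‖F‖ * ‖η‖ := (Complex.re_le_norm _).trans (norm_inner_le_norm _ _)
  -- `Re ⟪F, W⟫ = -Re ζ ∫ |F|²/ν₀ dμ`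
  have h5 : -(1 / (16 * B ^ 2) * ‖F‖ ^ 2) ≤ (⟪F, W⟫_ℂ).re := by
    rw [L2.inner_def, ← RCLike.re_to_complex, ← integral_re (L2.integrable_inner F W),
      norm_sq_eq_integral, ← integral_const_mul, ← integral_neg]
    refine integral_mono_ae ((integrable_norm_sq F).const_mul _).neg
      (L2.integrable_inner F W).re ?_
    filter_upwards [hWae] with v hv
    have hp := h.nu0_pos v
    have e : ((symb r₀ n ζ v - (nu0 r₀ v : ℝ)) / (nu0 r₀ v : ℝ)).re = -ζ.re / nu0 r₀ v := by
      rw [Complex.div_ofReal_re, Complex.sub_re, symb_re, Complex.ofReal_re]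
      ring
    have e2 : (⟪F v, W v⟫_ℂ).re = -ζ.re / nu0 r₀ v * ‖F v‖ ^ 2 := by
      rw [hv, ← e, Complex.sq_norm, Complex.normSq_apply]
      simp only [RCLike.inner_apply, Complex.mul_re, Complex.conj_re, Complex.conj_im,
        Complex.mul_im]
      ring
    rw [RCLike.re_to_complex, e2, ← neg_mul]
    refine mul_le_mul_of_nonneg_right ?_ (by positivity)
    rw [neg_div, neg_le_neg_iff, div_le_iff₀ hp]
    calc ζ.re ≤ c / (16 * B ^ 2) := hζ
      _ = 1 / (16 * B ^ 2) * c := by ring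
      _ ≤ _ := by gcongr; exact hν v
  have hf0 := norm_nonneg F
  have hx0 := norm_nonneg η
  have hD0 : 0 ≤ D := norm_nonneg _
  have h6 : ‖F‖ ≤ A * ‖η‖ + B * D := by
    calc ‖F‖ ≤ A * (‖η‖ + D) + A' * D := h1.trans (by gcongr)
      _ = _ := by rw [hB]; ring
  have h7 : (B * D) ^ 2 ≤ 2 * B ^ 2 * ‖F‖ * ‖η‖ + ‖F‖ ^ 2 / 8 := by
    calc (B * D) ^ 2 = B ^ 2 * D ^ 2 := by ring
      _ ≤ B ^ 2 * (2 * (‖F‖ * ‖η‖) + 2 * (1 / (16 * B ^ 2) * ‖F‖ ^ 2)) := by gcongr; linarith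
      _ = _ := by field_simp; ring
  -- Young's inequality absorbs half of `‖F‖`.
  have h8 : B * D ≤ ‖F‖ / 2 + 2 * B ^ 2 * ‖η‖ := by
    refine le_of_sq_le_sq (h7.trans ?_) (by positivity)
    have : 0 ≤ (B ^ 2 * ‖η‖) ^ 2 := by positivity
    nlinarith [sq_nonneg ‖F‖]
  linarith

end Good

/-! ### Coercivity far from the real axis -/

namespace Good

variable {r₀ : V → V → ℝ} {C : ℝ}

/-- The lower bound on the symbol far from the real axis: where `n·v` could cancel `Im ζ`, the
velocity is so large that `ν₀(v) ≥ 2 Re ζ`. -/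
lemma symb_lower {c Θ Ψ : ℝ} (hc : 0 < c) (hν : ∀ v, c * jap v ≤ nu0 r₀ v)
    (hΘ1 : Θ ≤ 1) (hΨ : 4 / c ≤ Ψ) {n : Fin 3 → ℤ} {ζ : ℂ} (h1 : Θ < ζ.re)
    (h2 : Ψ * (1 + ‖nV n‖) * (1 + ζ.re - Θ) ≤ |ζ.im|) (v : V) :
    min (1 / 2) (c / 4) * Ψ ≤ ‖symb r₀ n ζ v‖ := by
  have hΨ0 : 0 < Ψ := lt_of_lt_of_le (by positivity) hΨ
  set x := 1 + ζ.re - Θ with hx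
  have hx1 : 1 ≤ x := by linarith
  have hx2 : ζ.re ≤ x := by linarith
  have hN := norm_nonneg (nV n)
  by_cases hl : |ell n v| ≤ |ζ.im| / 2
  · calc min (1 / 2) (c / 4) * Ψ ≤ 1 / 2 * Ψ := by gcongr; exact min_le_left _ _
      _ = 1 / 2 * (Ψ * 1 * 1) := by ring
      _ ≤ 1 / 2 * (Ψ * (1 + ‖nV n‖) * x) := by gcongr; linarith
      _ ≤ |ζ.im| - |ell n v| := by linarith
      _ ≤ |ell n v - ζ.im| := by rw [abs_sub_comm]; exact abs_sub_abs_le_abs_sub _ _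
      _ ≤ _ := by rw [← symb_im r₀]; exact Complex.abs_im_le_norm _
  · rw [not_le] at hl
    have e1 : Ψ * x / 2 ≤ ‖v‖ := by
      have e0 := abs_ell_le n v
      have e3 : (1 + ‖nV n‖) * (Ψ * x / 2) ≤ (1 + ‖nV n‖) * ‖v‖ := by
        have := norm_nonneg v
        nlinarith
      exact le_of_mul_le_mul_left e3 (by positivity)
    have e2 : c * (Ψ * x / 2) ≤ nu0 r₀ v :=
      le_trans (by gcongr; exact e1.trans (norm_le_jap v)) (hν v)
    have e4 : 4 ≤ c * Ψ := by rwa [div_le_iff₀' hc] at hΨ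
    calc min (1 / 2) (c / 4) * Ψ ≤ c / 4 * Ψ := by gcongr; exact min_le_right _ _
      _ ≤ nu0 r₀ v - ζ.re := by nlinarith
      _ ≤ |nu0 r₀ v - ζ.re| := le_abs_self _
      _ ≤ _ := by rw [← symb_re r₀ n]; exact Complex.abs_re_le_norm _

lemma symb_rel_lower (h : Good r₀ C) {n : Fin 3 → ℤ} {ζ : ℂ} {k : ℝ} (hk : 0 < k)
    (hl : ∀ v, k ≤ ‖symb r₀ n ζ v‖) : ∃ k' > 0, ∀ v, k' * nu0 r₀ v ≤ ‖symb r₀ n ζ v‖ := by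
  set y := max ζ.re 1 with hy
  have hy0 : 0 < y := lt_of_lt_of_le one_pos (le_max_right _ _)
  refine ⟨min (1 / 2) (k / (2 * y)), by positivity, fun v => ?_⟩
  have hp := h.nu0_pos v
  by_cases hv : 2 * y ≤ nu0 r₀ v
  · calc min (1 / 2) (k / (2 * y)) * nu0 r₀ v ≤ 1 / 2 * nu0 r₀ v := by
          gcongr; exact min_le_left _ _
      _ ≤ nu0 r₀ v - ζ.re := by linarith [le_max_left ζ.re 1]
      _ ≤ |nu0 r₀ v - ζ.re| := le_abs_self _
      _ ≤ _ := by rw [← symb_re r₀ n]; exact Complex.abs_re_le_norm _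
  · refine le_trans ?_ (hl v)
    calc min (1 / 2) (k / (2 * y)) * nu0 r₀ v ≤ k / (2 * y) * (2 * y) := by
          gcongr
          · exact min_le_right _ _
          · linarith
      _ = k := by field_simp

/-- `P` maps `L¹(μ)` to bounded functions. -/
lemma markov_bound (h : Good r₀ C) : ∃ M > 0, ∀ F : Lp ℂ 2 (mu r₀),
    ‖h.markov F‖ ≤ M * ∫ v, ‖F v‖ ∂(mu r₀) := by
  have hfin := h.finite_mu
  obtain ⟨c, hc, hν⟩ := h.le_nu0
  have hC := h.pos
  set m : ℝ := ((measureUnivNNReal (mu r₀) ^ (2 : ENNReal).toReal⁻¹ : NNReal) : ℝ) with hm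
  refine ⟨(m + 1) * (2 * C / c ^ 2), by positivity, fun F => ?_⟩
  have hFi : Integrable F (mu r₀) := (Lp.memLp F).integrable (by norm_num)
  have hI0 : 0 ≤ ∫ v, ‖F v‖ ∂(mu r₀) := integral_nonneg fun v => norm_nonneg _
  have hFd : Integrable (fun u => dens r₀ u * ‖F u‖) := h.integrable_mu_iff.mp hFi.norm
  have hId : ∫ v, ‖F v‖ ∂(mu r₀) = ∫ u, dens r₀ u * ‖F u‖ := by
    have := h.setIntegral_mu (fun v => ‖F v‖) MeasurableSet.univ
    simpa using this
  have hb : ∀ᵐ v ∂(mu r₀), ‖h.markov F v‖ ≤ 2 * C / c ^ 2 * ∫ v, ‖F v‖ ∂(mu r₀) := by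
    filter_upwards [h.markov_ae F] with v hv
    have hp := h.nu0_pos v
    rw [hv, norm_smul, norm_inv, Real.norm_of_nonneg hp.le, inv_mul_le_iff₀ hp, hId,
      ← integral_const_mul, ← integral_const_mul]
    refine norm_integral_le_of_norm_le ((hFd.const_mul _).const_mul _)
      (Eventually.of_forall fun u => ?_)
    rw [norm_smul, Real.norm_of_nonneg (h.nonneg _ _)]
    have hj : (0 : ℝ) < jap u := jap_pos u
    have hj' : (0 : ℝ) < jap v := jap_pos v
    calc r₀ u v * ‖F u‖ ≤ (2 * C * (jap u * Real.exp (-‖u‖ ^ 2)) * jap v) * ‖F u‖ := by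
          gcongr; exact h.le u v
      _ = (c * jap v) * (2 * C / c ^ 2 * ((c * jap u) * Real.exp (-‖u‖ ^ 2) * ‖F u‖)) := by
          field_simp
      _ ≤ nu0 r₀ v * (2 * C / c ^ 2 * (nu0 r₀ u * Real.exp (-‖u‖ ^ 2) * ‖F u‖)) := by
          gcongr
          · exact hν v
          · exact hν u
      _ = _ := by rw [dens]
  calc ‖h.markov F‖ ≤ m * (2 * C / c ^ 2 * ∫ v, ‖F v‖ ∂(mu r₀)) :=
        Lp.norm_le_of_ae_bound (by positivity) hb
    _ ≤ (m + 1) * (2 * C / c ^ 2 * ∫ v, ‖F v‖ ∂(mu r₀)) := by gcongr; linarith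
    _ = _ := by ring

/-- If the symbol is large, `P F` is small compared with the multiplier part of the operator. -/
lemma markov_small (h : Good r₀ C) : ∃ M > 0, ∀ (n : Fin 3 → ℤ) (ζ : ℂ) (k : ℝ), 0 < k →
    (∀ v, k ≤ ‖symb r₀ n ζ v‖) → ∀ F E : Lp ℂ 2 (mu r₀),
    (E =ᵐ[mu r₀] fun v => (symb r₀ n ζ v / (nu0 r₀ v : ℝ)) * F v) →
    ‖h.markov F‖ ≤ M / k * ‖E‖ := by
  have hfin := h.finite_mu
  obtain ⟨M, hM, H⟩ := h.markov_bound
  set N : ℝ := (∫ v, ‖nu0 r₀ v‖ ^ (2 : ℝ) ∂(mu r₀)) ^ (1 / (2 : ℝ)) with hN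
  have hN0 : 0 ≤ N := by positivity
  refine ⟨M * (N + 1), by positivity, fun n ζ k hk hl F E hE => ?_⟩
  have hν2 : MemLp (nu0 r₀) (ENNReal.ofReal 2) (mu r₀) := by
    rw [ENNReal.ofReal_ofNat]
    refine (memLp_two_iff_integrable_sq h.measurable_nu0.aestronglyMeasurable).mpr ?_
    exact h.integrable_nu0_pow (by norm_num)
  have hE2 : MemLp E (ENNReal.ofReal 2) (mu r₀) := by
    rw [ENNReal.ofReal_ofNat]; exact Lp.memLp E
  have hCS : ∫ v, ‖nu0 r₀ v‖ * ‖E v‖ ∂(mu r₀) ≤ N * ‖E‖ := by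
    have h0 := integral_mul_norm_le_Lp_mul_Lq Real.HolderConjugate.two_two hν2 hE2.norm
    simp only [norm_norm] at h0
    refine h0.trans ?_
    have : (∫ v, ‖E v‖ ^ (2 : ℝ) ∂(mu r₀)) ^ (1 / (2 : ℝ)) = ‖E‖ := by
      simp only [Real.rpow_two]
      rw [← norm_sq_eq_integral, ← Real.sqrt_eq_rpow, Real.sqrt_sq (norm_nonneg _)]
    rw [this]
  have hint : Integrable (fun v => ‖nu0 r₀ v‖ * ‖E v‖) (mu r₀) := by
    rw [ENNReal.ofReal_ofNat] at hν2 hE2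
    exact hν2.norm.integrable_mul hE2.norm
  have hF : ∫ v, ‖F v‖ ∂(mu r₀) ≤ k⁻¹ * (N * ‖E‖) := by
    calc ∫ v, ‖F v‖ ∂(mu r₀) ≤ ∫ v, k⁻¹ * (‖nu0 r₀ v‖ * ‖E v‖) ∂(mu r₀) := by
          refine integral_mono_ae ((Lp.memLp F).integrable (by norm_num)).norm
            (hint.const_mul _) ?_
          filter_upwards [hE] with v hv
          have hp := h.nu0_pos v
          rw [hv, norm_mul, norm_div, Complex.norm_real, inv_mul_eq_div, le_div_iff₀ hk]
          have : ‖nu0 r₀ v‖ ≠ 0 := by simpa using hp.ne'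
          calc ‖F v‖ * k ≤ ‖F v‖ * ‖symb r₀ n ζ v‖ := by gcongr; exact hl v
            _ = _ := by field_simp
      _ ≤ _ := by rw [integral_const_mul]; gcongr
  calc ‖h.markov F‖ ≤ M * (k⁻¹ * (N * ‖E‖)) := (H F).trans (by gcongr)
    _ ≤ M * (k⁻¹ * ((N + 1) * ‖E‖)) := by gcongr; linarith
    _ = _ := by rw [div_eq_mul_inv]; ring

/-- Coercivity of `F ↦ ((ν₀ + i n·v - ζ)/ν₀) F - P F` far from the real axis. -/
lemma coercive_right (h : Good r₀ C) {c : ℝ} (hc : 0 < c) (hν : ∀ v, c * jap v ≤ nu0 r₀ v) :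
    ∃ Ψ > 0, ∀ (n : Fin 3 → ℤ) (ζ : ℂ) (Θ : ℝ), Θ ≤ 1 → Θ < ζ.re →
    Ψ * (1 + ‖nV n‖) * (1 + ζ.re - Θ) ≤ |ζ.im| →
    (∃ k > 0, ∀ v, k * nu0 r₀ v ≤ ‖symb r₀ n ζ v‖) ∧
    ∃ L ≥ 0, ∀ F E : Lp ℂ 2 (mu r₀),
    (E =ᵐ[mu r₀] fun v => (symb r₀ n ζ v / (nu0 r₀ v : ℝ)) * F v) →
    ‖F‖ ≤ L * ‖E - h.markov F‖ := by
  obtain ⟨M, hM, H⟩ := h.markov_small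
  set κ := min (1 / 2) (c / 4) with hκ
  have hκ0 : 0 < κ := by positivity
  refine ⟨max (4 / c) (2 * M / κ), by positivity, fun n ζ Θ hΘ h1 h2 => ?_⟩
  set Ψ := max (4 / c) (2 * M / κ) with hΨ
  have hΨ0 : 0 < Ψ := by positivity
  have hl := symb_lower (r₀ := r₀) hc hν hΘ (le_max_left _ _) h1 h2
  have hk0 : 0 < κ * Ψ := by positivity
  obtain ⟨k, hk, hkl⟩ := h.symb_rel_lower hk0 hl
  refine ⟨⟨k, hk, hkl⟩, k⁻¹ * 2, by positivity, fun F E hE => ?_⟩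
  have e1 := H n ζ _ hk0 hl F E hE
  have e2 : M / (κ * Ψ) ≤ 1 / 2 := by
    have : 2 * M / κ ≤ Ψ := le_max_right _ _
    rw [div_le_iff₀ hκ0] at this
    rw [div_le_iff₀ hk0]
    linarith
  have e3 : ‖h.markov F‖ ≤ 1 / 2 * ‖E‖ := e1.trans (by gcongr)
  have e4 : ‖E‖ ≤ 2 * ‖E - h.markov F‖ := by
    have := norm_sub_norm_le E (h.markov F)
    linarith
  have e5 : ‖F‖ ≤ k⁻¹ * ‖E‖ := by
    refine Lp.norm_le_mul_norm_of_ae_le_mul ?_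
    filter_upwards [hE] with v hv
    have hp := h.nu0_pos v
    rw [hv, norm_mul, norm_div, Complex.norm_real, Real.norm_of_nonneg hp.le, inv_mul_eq_div,
      le_div_iff₀ hk, mul_comm]
    gcongr
    rw [le_div_iff₀ hp]
    exact hkl v
  calc ‖F‖ ≤ k⁻¹ * (2 * ‖E - h.markov F‖) := e5.trans (by gcongr)
    _ = _ := by ring

end Good

/-! ### Solving the equation -/

lemma norm_nV_neg (n : Fin 3 → ℤ) : ‖nV (-n)‖ = ‖nV n‖ := by
  have : nV (-n) = -nV n := by ext i; simp [nV]
  rw [this, norm_neg]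

lemma conj_mem_Om {Θ Ψ : ℝ} {n : Fin 3 → ℤ} {ζ : ℂ} (hζ : ζ ∈ Om Θ Ψ n) :
    (starRingEnd ℂ) ζ ∈ Om Θ Ψ (-n) := by
  simpa [Om, norm_nV_neg] using hζ

lemma symb_conj (r₀ : V → V → ℝ) (n : Fin 3 → ℤ) (ζ : ℂ) (v : V) :
    symb r₀ (-n) ((starRingEnd ℂ) ζ) v = (starRingEnd ℂ) (symb r₀ n ζ v) := by
  have : ell (-n) v = -ell n v := by simp [ell, Finset.sum_neg_distrib]
  simp only [symb, this, map_sub, map_add, map_mul, Complex.conj_ofReal, Complex.conj_I]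
  push_cast
  ring

namespace Good

variable {r₀ : V → V → ℝ} {C : ℝ}

/-- For suitable constants the operator `F ↦ ((ν₀ + i n·v - ζ)/ν₀) F - P F` is coercive for every
`n ≠ 0` and `ζ ∈ Ω_n`, and the symbol is bounded below by a multiple of `ν₀`. -/
lemma coercive (h : Good r₀ C) : ∃ Θ > 0, ∃ Ψ > 0, (∀ v : V, Θ < nu0 r₀ v) ∧
    ∀ n : Fin 3 → ℤ, n ≠ 0 → ∀ ζ ∈ Om Θ Ψ n,
    (∃ k > 0, ∀ v, k * nu0 r₀ v ≤ ‖symb r₀ n ζ v‖) ∧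
    ∃ L ≥ 0, ∀ F E : Lp ℂ 2 (mu r₀),
    (E =ᵐ[mu r₀] fun v => (symb r₀ n ζ v / (nu0 r₀ v : ℝ)) * F v) →
    ‖F‖ ≤ L * ‖E - h.markov F‖ := by
  obtain ⟨c, hc, hν⟩ := h.le_nu0
  have hν' : ∀ v, c ≤ nu0 r₀ v := fun v =>
    le_trans (le_mul_of_one_le_right hc.le (one_le_jap v)) (hν v)
  obtain ⟨Θ₀, hΘ₀, L, hL, H1⟩ := h.coercive_left hc hν'
  obtain ⟨Ψ, hΨ, H2⟩ := h.coercive_right hc hν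
  set Θ := min Θ₀ (min 1 (c / 2)) with hΘ
  have hΘc : Θ ≤ c / 2 := (min_le_right _ _).trans (min_le_right _ _)
  refine ⟨Θ, by positivity, Ψ, hΨ, fun v => by linarith [hν' v], fun n hn ζ hζ => ?_⟩
  by_cases hre : ζ.re ≤ Θ
  · refine ⟨⟨1 / 2, by norm_num, fun v => ?_⟩, L, hL.le,
      H1 n hn ζ (hre.trans (min_le_left _ _))⟩
    calc 1 / 2 * nu0 r₀ v ≤ nu0 r₀ v - ζ.re := by linarith [hν' v]
      _ ≤ |nu0 r₀ v - ζ.re| := le_abs_self _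
      _ ≤ _ := by rw [← symb_re r₀ n]; exact Complex.abs_re_le_norm _
  · rw [not_le] at hre
    refine H2 n ζ Θ ((min_le_right _ _).trans (min_le_left _ _)) hre ?_
    by_contra hcon
    exact hζ ⟨hre, not_le.mp hcon⟩

lemma symb_div_le (h : Good r₀ C) (n : Fin 3 → ℤ) (ζ : ℂ) :
    ∃ K, ∀ v, ‖symb r₀ n ζ v / (nu0 r₀ v : ℝ)‖ ≤ K := by
  obtain ⟨c, hc, hν⟩ := h.le_nu0
  refine ⟨1 + (‖nV n‖ + ‖ζ‖) / c, fun v => ?_⟩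
  have hp := h.nu0_pos v
  rw [norm_div, Complex.norm_real, Real.norm_of_nonneg hp.le, div_le_iff₀ hp]
  have hn := norm_nonneg (nV n)
  have e1 : ‖symb r₀ n ζ v‖ ≤ nu0 r₀ v + |ell n v| + ‖ζ‖ := by
    unfold symb
    refine (norm_sub_le _ _).trans ?_
    gcongr
    refine (norm_add_le _ _).trans ?_
    simp [abs_of_pos hp]
  have e2 : |ell n v| ≤ ‖nV n‖ * jap v := (abs_ell_le n v).trans (by gcongr; exact norm_le_jap v)
  have e3 : ‖ζ‖ ≤ ‖ζ‖ * jap v := le_mul_of_one_le_right (norm_nonneg _) (one_le_jap v)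
  have e4 : (‖nV n‖ + ‖ζ‖) * jap v ≤ (‖nV n‖ + ‖ζ‖) / c * nu0 r₀ v := by
    rw [div_mul_eq_mul_div, le_div_iff₀ hc, mul_assoc, mul_comm _ c]
    gcongr
    exact hν v
  linarith

/-- Solvability in `L²(μ)`: coercivity for `(n, ζ)` gives closed range, and coercivity for
`(-n, conj ζ)`, which yields the adjoint operator, gives dense range. -/
lemma solve_L2 (h : Good r₀ C) {n : Fin 3 → ℤ} {ζ : ℂ} {L L' : ℝ} (hL : 0 ≤ L)
    (H1 : ∀ F E : Lp ℂ 2 (mu r₀),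
      (E =ᵐ[mu r₀] fun v => (symb r₀ n ζ v / (nu0 r₀ v : ℝ)) * F v) →
      ‖F‖ ≤ L * ‖E - h.markov F‖)
    (H2 : ∀ F E : Lp ℂ 2 (mu r₀),
      (E =ᵐ[mu r₀] fun v => (symb r₀ (-n) ((starRingEnd ℂ) ζ) v / (nu0 r₀ v : ℝ)) * F v) →
      ‖F‖ ≤ L' * ‖E - h.markov F‖) (G : Lp ℂ 2 (mu r₀)) :
    ∃ F : Lp ℂ 2 (mu r₀), G =ᵐ[mu r₀]
      fun v => (symb r₀ n ζ v / (nu0 r₀ v : ℝ)) * F v - h.markov F v := by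
  have hm : ∀ n ζ, Measurable fun v => symb r₀ n ζ v / (nu0 r₀ v : ℝ) := fun n ζ =>
    (h.measurable_symb n ζ).div (Complex.measurable_ofReal.comp h.measurable_nu0)
  obtain ⟨K, hK⟩ := h.symb_div_le n ζ
  obtain ⟨K', hK'⟩ := h.symb_div_le (-n) ((starRingEnd ℂ) ζ)
  obtain ⟨M, hM⟩ := exists_mulOp (m := mu r₀) (hm n ζ) hK
  obtain ⟨M', hM'⟩ := exists_mulOp (m := mu r₀) (hm (-n) ((starRingEnd ℂ) ζ)) hK'
  have hadj : ∀ x y, ⟪(M' - h.markov) x, y⟫_ℂ = ⟪x, (M - h.markov) y⟫_ℂ := fun x y => by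
    rw [sub_apply, sub_apply, inner_sub_left,
      inner_sub_right, h.markov_symm, L2.inner_def, L2.inner_def]
    congr 1
    refine integral_congr_ae ?_
    filter_upwards [hM y, hM' x] with v h1 h2
    rw [h1, h2, symb_conj]
    simp only [RCLike.inner_apply, map_mul, map_div₀, Complex.conj_conj, Complex.conj_ofReal]
    ring
  obtain ⟨F, hF⟩ := surjective_of_bddBelow (M - h.markov) (M' - h.markov) hadj hL
    (fun x => H1 x (M x) (hM x))
    (fun x hx => by
      have h1 := H2 x (M' x) (hM' x)
      rw [← sub_apply, hx, norm_zero, mul_zero] at h1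
      exact norm_le_zero_iff.mp h1) G
  refine ⟨F, ?_⟩
  rw [sub_apply] at hF
  filter_upwards [hM F, Lp.coeFn_sub (M F) (h.markov F)] with v h1 h2
  rw [← hF, h2, Pi.sub_apply, h1]

lemma Kzn_eq (n : Fin 3 → ℤ) (ζ : ℂ) (g : V → ℂ) (v : V) :
    Kzn r₀ n ζ g v = ∫ u : V, (r₀ v u : ℂ) * (symb r₀ n ζ u)⁻¹ * g u := rfl

lemma kernel_bound (h : Good r₀ C) {n : Fin 3 → ℤ} {ζ : ℂ} {k : ℝ} (hk : 0 < k)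
    (hl : ∀ v, k * nu0 r₀ v ≤ ‖symb r₀ n ζ v‖) : ∃ M > 0, ∀ u v,
    ‖(r₀ v u : ℂ) * (symb r₀ n ζ u)⁻¹‖ ≤ M * (jap v * Real.exp (-‖v‖ ^ 2)) := by
  obtain ⟨c, hc, hν⟩ := h.le_nu0
  have hC := h.pos
  refine ⟨2 * C / (k * c), by positivity, fun u v => ?_⟩
  have hp := h.nu0_pos u
  have hs : 0 < ‖symb r₀ n ζ u‖ := lt_of_lt_of_le (by positivity) (hl u)
  have hj := jap_pos u
  have hj' := jap_pos v
  rw [norm_mul, norm_inv, Complex.norm_real, Real.norm_of_nonneg (h.nonneg _ _),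
    ← div_eq_mul_inv, div_le_iff₀ hs]
  calc r₀ v u ≤ 2 * C * (jap v * Real.exp (-‖v‖ ^ 2)) * jap u := h.le v u
    _ = 2 * C / (k * c) * (jap v * Real.exp (-‖v‖ ^ 2)) * (k * (c * jap u)) := by field_simp
    _ ≤ 2 * C / (k * c) * (jap v * Real.exp (-‖v‖ ^ 2)) * (k * nu0 r₀ u) := by
      gcongr; exact hν u
    _ ≤ _ := by gcongr; exact hl u

/-- From solvability in `L²(μ)` to solvability in `L¹`: a first iteration `h ↦ K h` moves the datum
to `e^{-|v|²} ν₀ L²(μ)`. -/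
lemma solve_L1 (h : Good r₀ C) {n : Fin 3 → ℤ} {ζ : ℂ} {k : ℝ} (hk : 0 < k)
    (hl : ∀ v, k * nu0 r₀ v ≤ ‖symb r₀ n ζ v‖)
    (hsol : ∀ G : Lp ℂ 2 (mu r₀), ∃ F : Lp ℂ 2 (mu r₀), G =ᵐ[mu r₀]
      fun v => (symb r₀ n ζ v / (nu0 r₀ v : ℝ)) * F v - h.markov F v)
    (f : V → ℂ) (hf : Integrable f) :
    ∃ g : V → ℂ, Integrable g ∧ ∀ᵐ v : V ∂volume, g v - Kzn r₀ n ζ g v = f v := by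
  have hfin := h.finite_mu
  obtain ⟨c, hc, hν⟩ := h.le_nu0
  obtain ⟨M, hM, hker⟩ := h.kernel_bound hk hl
  have hs0 : ∀ v, symb r₀ n ζ v ≠ 0 := fun v => by
    have : 0 < k * nu0 r₀ v := mul_pos hk (h.nu0_pos v)
    exact norm_pos_iff.mp (this.trans_le (hl v))
  have hrm : Measurable fun p : V × V => (r₀ p.1 p.2 : ℂ) * (symb r₀ n ζ p.2)⁻¹ :=
    (Complex.measurable_ofReal.comp h.cont.measurable).mul
      ((h.measurable_symb n ζ).comp measurable_snd).inv
  have hint : ∀ (g : V → ℂ), Integrable g → ∀ v,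
      Integrable fun u => (r₀ v u : ℂ) * (symb r₀ n ζ u)⁻¹ * g u := fun g hg v =>
    hg.bdd_mul (hrm.comp measurable_prodMk_left).aestronglyMeasurable
      (Eventually.of_forall fun u => hker u v)
  have hKb : ∀ v, ‖Kzn r₀ n ζ f v‖ ≤ M * (jap v * Real.exp (-‖v‖ ^ 2)) * ∫ u, ‖f u‖ := fun v => by
    rw [Kzn_eq, ← integral_const_mul]
    refine norm_integral_le_of_norm_le (hf.norm.const_mul _) (Eventually.of_forall fun u => ?_)
    rw [norm_mul]
    gcongr
    exact hker u v
  have hKm : AEStronglyMeasurable (Kzn r₀ n ζ f) volume :=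
    (hrm.aestronglyMeasurable.mul hf.1.comp_snd).integral_prod_right'
  set q : V → ℂ := fun v => (((nu0 r₀ v)⁻¹ * Real.exp (‖v‖ ^ 2) : ℝ) : ℂ) with hq
  have hqm : Measurable q :=
    Complex.measurable_ofReal.comp (h.measurable_nu0.inv.mul (by fun_prop))
  -- `ν₀⁻¹ e^{|v|²} K f` is a bounded function, hence belongs to `L²(μ)`.
  have hGm : MemLp (fun v => q v * Kzn r₀ n ζ f v) 2 (mu r₀) := by
    refine MemLp.of_bound ((hqm.aestronglyMeasurable.mul hKm).mono_ac
      (withDensity_absolutelyContinuous _ _)) (M / c * ∫ u, ‖f u‖) (Eventually.of_forall fun v => ?_)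
    have hp := h.nu0_pos v
    have hI : 0 ≤ ∫ u, ‖f u‖ := integral_nonneg fun u => norm_nonneg _
    have hj := jap_pos v
    have he : Real.exp (‖v‖ ^ 2) * Real.exp (-‖v‖ ^ 2) = 1 := by
      rw [← Real.exp_add]; simp
    rw [norm_mul, hq, Complex.norm_real, Real.norm_of_nonneg (by positivity)]
    calc (nu0 r₀ v)⁻¹ * Real.exp (‖v‖ ^ 2) * ‖Kzn r₀ n ζ f v‖
        ≤ (c * jap v)⁻¹ * Real.exp (‖v‖ ^ 2) *
          (M * (jap v * Real.exp (-‖v‖ ^ 2)) * ∫ u, ‖f u‖) := by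
          gcongr
          · exact hν v
          · exact hKb v
      _ = M / c * (Real.exp (‖v‖ ^ 2) * Real.exp (-‖v‖ ^ 2)) * ∫ u, ‖f u‖ := by field_simp
      _ = _ := by rw [he, mul_one]
  obtain ⟨F, hF⟩ := hsol (hGm.toLp _)
  set w : V → ℂ := fun v => (Real.exp (-‖v‖ ^ 2) : ℂ) * symb r₀ n ζ v * F v with hw
  have hwi : Integrable w := by
    have h1 : Integrable (fun v => (symb r₀ n ζ v / (nu0 r₀ v : ℝ)) * F v) (mu r₀) := by
      have h2 : Integrable (hGm.toLp _ + h.markov F : Lp ℂ 2 (mu r₀)) (mu r₀) :=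
        (Lp.memLp _).integrable (by norm_num)
      refine h2.congr ?_
      filter_upwards [hF, Lp.coeFn_add (hGm.toLp _) (h.markov F)] with v h3 h4
      rw [h4, Pi.add_apply, h3]
      ring
    rw [h.integrable_mu_iff] at h1
    refine h1.congr (Eventually.of_forall fun v => ?_)
    have : ((nu0 r₀ v : ℝ) : ℂ) ≠ 0 := Complex.ofReal_ne_zero.mpr (h.nu0_pos v).ne'
    simp only [hw, dens, Complex.real_smul]
    push_cast
    field_simp
  -- By detailed balance `K w` is `e^{-|v|²} ν₀` times the Markov operator applied to `F`.
  have hKw : ∀ v, Kzn r₀ n ζ w v = (Real.exp (-‖v‖ ^ 2) : ℂ) * ∫ u, r₀ u v • F u := fun v => by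
    rw [Kzn_eq, ← integral_const_mul]
    refine integral_congr_ae (Eventually.of_forall fun u => ?_)
    have h1 : ((r₀ u v : ℝ) : ℂ) * (Real.exp (-‖v‖ ^ 2) : ℝ)
        = (r₀ v u : ℝ) * (Real.exp (-‖u‖ ^ 2) : ℝ) := by
      exact_mod_cast h.q_symm u v
    simp only [hw, Complex.real_smul]
    rw [show ((Real.exp (-‖v‖ ^ 2) : ℝ) : ℂ) * ((r₀ u v : ℂ) * F u)
      = ((r₀ u v : ℝ) : ℂ) * (Real.exp (-‖v‖ ^ 2) : ℝ) * F u by ring, h1]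
    field_simp [hs0 u]
  refine ⟨fun v => f v + w v, hf.add hwi, ?_⟩
  have hae := h.ae_mu_iff.mp (hF.and ((hGm.coeFn_toLp).and (h.markov_ae F)))
  filter_upwards [hae] with v ⟨h1, h2, h3⟩
  have hsum : Kzn r₀ n ζ (fun v => f v + w v) v = Kzn r₀ n ζ f v + Kzn r₀ n ζ w v := by
    simp only [Kzn_eq, mul_add]
    exact integral_add (hint f hf v) (hint w hwi v)
  have hp : ((nu0 r₀ v : ℝ) : ℂ) ≠ 0 := Complex.ofReal_ne_zero.mpr (h.nu0_pos v).ne'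
  have he : ((Real.exp (-‖v‖ ^ 2) : ℝ) : ℂ) * ((Real.exp (‖v‖ ^ 2) : ℝ) : ℂ) = 1 := by
    rw [← Complex.ofReal_mul, ← Real.exp_add]; simp
  rw [h2, h3] at h1
  have h4 : Kzn r₀ n ζ f v = w v - Kzn r₀ n ζ w v := by
    rw [hKw]
    simp only [hw, hq, Complex.real_smul] at h1 ⊢
    push_cast at h1 he ⊢
    field_simp at h1
    linear_combination Complex.exp (-(‖v‖ : ℂ) ^ 2) * h1 - Kzn r₀ n ζ f v * he
  rw [hsum, h4]
  ring

end Good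

/-- surjectivity of `1 − K_{ζ,n}` on `L¹(ℝ³;ℂ)`. -/
theorem stmt_14 (r₀ : V → V → ℝ)
    (hr_nonneg : ∀ u v : V, 0 ≤ r₀ u v)
    (hr_C1 : ContDiff ℝ 1 (Function.uncurry r₀))
    (hr_detbal : R0DetailedBalance r₀)
    (C' : ℝ) (hC' : 0 < C') (hr_bd : R0Bounds r₀ C')
    (C₂ : ℝ) (hC₂ : 0 < C₂) (hr_db : R0DerivBounds r₀ C₂) :
    ∃ Θ > 0, ∃ Ψ > 0, (∀ v : V, Θ < nu0 r₀ v) ∧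
      ∀ n : Fin 3 → ℤ, n ≠ 0 → ∀ ζ ∈ Om Θ Ψ n, ∀ h : V → ℂ, Integrable h →
        ∃ g : V → ℂ, Integrable g ∧ ∀ᵐ v : V ∂volume, g v - Kzn r₀ n ζ g v = h v := by
  have hG : Good r₀ C' := ⟨hr_nonneg, hr_C1.continuous, hr_detbal, hC', hr_bd⟩
  obtain ⟨Θ, hΘ, Ψ, hΨ, hν, H⟩ := hG.coercive
  refine ⟨Θ, hΘ, Ψ, hΨ, hν, fun n hn ζ hζ f hf => ?_⟩
  obtain ⟨⟨k, hk, hl⟩, L, hL, H1⟩ := H n hn ζ hζ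
  obtain ⟨-, L', -, H2⟩ := H (-n) (neg_ne_zero.mpr hn) _ (conj_mem_Om hζ)
  exact hG.solve_L1 hk hl (hG.solve_L2 hL H1 H2) f hf
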